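/- arXiv:2211.02991 — 3 statements merged into one kernel-verified Lean document; each statement's English description precedes it below -/
import Mathlib

section
/- Let (M,d,μ) be a metric measure space in which every ball has finite measure and r ↦ V_x(r)=μ(B(x,r)) is continuous for every x, let β>1, and let k : M×M → ℝ be measurable and satisfy (K3): |k(x,y)| ≤ B·V_x(d(x,y))^{−1/β} and |k(x,y)| ≤ B·V_y(d(x,y))^{−1/β} for all x,y, for some B ≥ 0. Then there exists a constant C such that for all x ∈ M and all radii r_1<r_2 with 0<V_x(r_1)<V_x(r_2): | ∫_{r_1 ≤ d(x,y) ≤ r_2} |k(x,y)|^{β} dμ(y) − ∫_{V_x(r_1)}^{V_x(r_2)} (k^*(x,t))^{β} dt | ≤ C, where k^*(x,·) is the decreasing rearrangement of k(x,·). -/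
/-!
Fix `x`, put `F y = |k x y| ^ β`, `v₁ = V_x(r₁)`, `v₂ = V_x(r₂)`, `D = B ^ β`, and let `A` be the
annulus. By (K3), `F y * V_x(d(x,y)) ≤ D`; hence for `s ≥ D / V_x(r)` the superlevel set
`{F > s}` lies in the ball `B(x,r)` (`superlevel_subset`). By the layer-cake formula the two
integrals are `∫₀^∞ m(s) ds` and `∫₀^∞ n(s) ds`, where `m(s) = μ(A ∩ {F > s})` and `n(s)` is the
length of `{t ∈ (v₁, v₂] : t < μ{F > s}}`, because `s < k^*(x,t) ^ β` holds exactly when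
`t < μ{F > s}` (`lt_decRearr_iff`). Then:

* for `s ≥ D / v₁` both `m(s)` and `n(s)` vanish;
* for `D / v₂ ≤ s < D / v₁` the set `{F > s}` lies in `B(x,r₂)`, so `m(s)` and `n(s)` both lie
  between `μ{F > s} - v₁` and `μ{F > s}`, and `n(s) ≤ m(s) ≤ n(s) + v₁`;
* for `s < D / v₂` both are at most `v₂`.

So `|m - n|` is at most `v₁` on `(0, D / v₁)` plus `v₂` on `(0, D / v₂)`, whose integral
is `2 * D`. All comparisons are made between `ℝ≥0∞`-valued integrals.
-/

open MeasureTheory Metric Set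
open scoped ENNReal

noncomputable section

/-- `V_x(r) = μ(B(x,r))`, as a real number. -/
def ballVol {M : Type*} [MetricSpace M] [MeasurableSpace M] (μ : Measure M) (x : M) (r : ℝ) : ℝ :=
  (μ (closedBall x r)).toReal

/-- The decreasing rearrangement `g^*(t) = inf{s ≥ 0 : μ{|g| > s} ≤ t}`. -/
def decRearr {M : Type*} [MeasurableSpace M] (μ : Measure M) (g : M → ℝ) (t : ℝ) : ℝ :=
  sInf {s : ℝ | 0 ≤ s ∧ μ {x | s < |g x|} ≤ ENNReal.ofReal t}

/-- The superlevel sets of `|g|` at levels `s' ↓ s` increase to the one at level `s`, so the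
distribution function is right-continuous and the infimum defining `g^*` is well behaved. -/
lemma lt_decRearr_iff {M : Type*} [MeasurableSpace M] (μ : Measure M) (g : M → ℝ)
    {s t : ℝ} (hs : 0 ≤ s)
    (hne : ∃ u : ℝ, 0 ≤ u ∧ μ {x | u < |g x|} ≤ ENNReal.ofReal t) :
    s < decRearr μ g t ↔ ENNReal.ofReal t < μ {x | s < |g x|} := by
  constructor
  · intro h
    by_contra! hc
    have : decRearr μ g t ≤ s := csInf_le ⟨0, fun u hu => hu.1⟩ ⟨hs, hc⟩
    linarith
  · intro h
    have hU : {x | s < |g x|} = ⋃ n : ℕ, {x | s + 1 / ((n : ℝ) + 1) < |g x|} := by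
      ext y
      simp only [mem_ofPred_eq, mem_iUnion]
      constructor
      · intro hy
        obtain ⟨n, hn⟩ := exists_nat_one_div_lt (sub_pos.2 hy)
        exact ⟨n, by linarith⟩
      · rintro ⟨n, hn⟩
        have : (0 : ℝ) < 1 / ((n : ℝ) + 1) := by positivity
        linarith
    have hmono : Monotone fun n : ℕ => {x | s + 1 / ((n : ℝ) + 1) < |g x|} := by
      intro a b hab y hy
      have := Nat.one_div_le_one_div (α := ℝ) hab
      simp only [mem_ofPred_eq] at hy ⊢
      linarith
    rw [hU, hmono.measure_iUnion, lt_iSup_iff] at h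
    obtain ⟨n, hn⟩ := h
    have hpos : (0 : ℝ) < 1 / ((n : ℝ) + 1) := by positivity
    have : s + 1 / ((n : ℝ) + 1) ≤ decRearr μ g t := by
      refine le_csInf hne ?_
      rintro u ⟨-, hu⟩
      by_contra! hc
      refine absurd (hn.trans_le ((measure_mono ?_).trans hu)) (lt_irrefl _)
      intro y hy
      exact hc.trans hy
    linarith

/-- (K3) in product form. It also covers `V_x(d(x,y)) = 0`, where the negative power takes the
value `0`. -/
lemma rpow_mul_le {β B a v : ℝ} (hβ : 1 < β) (hB : 0 ≤ B) (ha : 0 ≤ a) (hv : 0 ≤ v)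
    (h : a ≤ B * v ^ (-(1 / β))) : a ^ β * v ≤ B ^ β := by
  have hβ0 : 0 < β := by linarith
  rcases hv.eq_or_lt with rfl | hv
  · simpa using Real.rpow_nonneg hB β
  · have h1 : a ^ β ≤ (B * v ^ (-(1 / β))) ^ β := Real.rpow_le_rpow ha h hβ0.le
    rw [Real.mul_rpow hB (Real.rpow_nonneg hv.le _), ← Real.rpow_mul hv.le] at h1
    have h2 : -(1 / β) * β = -1 := by field_simp
    rw [h2, Real.rpow_neg_one, ← div_eq_mul_inv, le_div_iff₀ hv] at h1
    exact h1

lemma ballVol_mono {M : Type*} [MetricSpace M] [MeasurableSpace M] (μ : Measure M)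
    (hfin : ∀ (x : M) (r : ℝ), μ (closedBall x r) ≠ ∞) (x : M) {r s : ℝ} (h : r ≤ s) :
    ballVol μ x r ≤ ballVol μ x s :=
  ENNReal.toReal_mono (hfin x s) (measure_mono (closedBall_subset_closedBall h))

/-- A function with `F y * V_x(d(x,y)) ≤ D` exceeds the level `s ≥ D / V_x(r)` only at points
with `d(x,y) < r`. -/
lemma superlevel_subset {M : Type*} [MetricSpace M] [MeasurableSpace M] (μ : Measure M)
    (hfin : ∀ (x : M) (r : ℝ), μ (closedBall x r) ≠ ∞) (x : M) {F : M → ℝ} {D r s : ℝ}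
    (hF : ∀ y, F y * ballVol μ x (dist x y) ≤ D) (hr : 0 < ballVol μ x r)
    (hs : 0 ≤ s) (hsD : D / ballVol μ x r ≤ s) : {y | s < F y} ⊆ {y | dist x y < r} := by
  intro y hy
  simp only [mem_ofPred_eq] at hy ⊢
  by_contra! hc
  have h1 := ballVol_mono μ hfin x hc
  rw [div_le_iff₀ hr] at hsD
  have h2 := hF y
  nlinarith

lemma abs_toReal_sub_le {a b c : ℝ≥0∞} (hc : c ≠ ∞) (h1 : a ≤ b + c) (h2 : b ≤ a + c) :
    |a.toReal - b.toReal| ≤ c.toReal := by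
  -- If one side is infinite then so is the other, and both real values are `0`.
  by_cases ha : a = ∞
  · have hb : b = ∞ := by
      by_contra hb
      exact absurd (h1.trans_lt (ENNReal.add_lt_top.2 ⟨Ne.lt_top hb, Ne.lt_top hc⟩)) (by simp [ha])
    simp [ha, hb]
  · have hb : b ≠ ∞ := ne_top_of_le_ne_top (ENNReal.add_ne_top.2 ⟨ha, hc⟩) h2
    have h1r := ENNReal.toReal_mono (ENNReal.add_ne_top.2 ⟨hb, hc⟩) h1
    have h2r := ENNReal.toReal_mono (ENNReal.add_ne_top.2 ⟨ha, hc⟩) h2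
    rw [ENNReal.toReal_add hb hc] at h1r
    rw [ENNReal.toReal_add ha hc] at h2r
    rw [abs_le]
    constructor <;> linarith

/-- The pointwise bound for `|m(s) - n(s)|`: `v₁` on `s < D / v₁` plus `v₂` on `s < D / v₂`. -/
def errBound (D v₁ v₂ s : ℝ) : ℝ≥0∞ :=
  (Iio (D / v₁)).indicator (fun _ => ENNReal.ofReal v₁) s
    + (Iio (D / v₂)).indicator (fun _ => ENNReal.ofReal v₂) s

lemma measurable_errBound (D v₁ v₂ : ℝ) : Measurable (errBound D v₁ v₂) :=
  (measurable_const.indicator measurableSet_Iio).add (measurable_const.indicator measurableSet_Iio)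

lemma lintegral_errBound {D v₁ v₂ : ℝ} (hD : 0 ≤ D) (h₁ : 0 < v₁) (h₂ : 0 < v₂) :
    ∫⁻ s in Ioi 0, errBound D v₁ v₂ s = ENNReal.ofReal (2 * D) := by
  have key : ∀ v : ℝ, 0 < v →
      ∫⁻ s in Ioi 0, (Iio (D / v)).indicator (fun _ => ENNReal.ofReal v) s = ENNReal.ofReal D := by
    intro v hv
    rw [lintegral_indicator_const measurableSet_Iio, Measure.restrict_apply measurableSet_Iio,
      Iio_inter_Ioi, Real.volume_Ioo, ← ENNReal.ofReal_mul hv.le]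
    congr 1
    field_simp
    ring
  unfold errBound
  rw [lintegral_add_left (measurable_const.indicator measurableSet_Iio), key v₁ h₁, key v₂ h₂,
    ← ENNReal.ofReal_add hD hD]
  congr 1
  ring

lemma volume_le_sub {v₁ v₂ : ℝ} {e : ℝ≥0∞} (he : e ≠ ∞) :
    volume ({t : ℝ | ENNReal.ofReal t < e} ∩ Ioc v₁ v₂) ≤ ENNReal.ofReal (e.toReal - v₁) := by
  rw [← Real.volume_Ioc]
  refine measure_mono ?_
  rintro t ⟨ht, ht1, -⟩
  exact ⟨ht1, (ENNReal.ofReal_le_iff_le_toReal he).1 (le_of_lt ht)⟩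

lemma le_volume {v₁ v₂ : ℝ} {e : ℝ≥0∞} (h₁ : 0 ≤ v₁) (he : e ≤ ENNReal.ofReal v₂) (h₂ : 0 ≤ v₂) :
    ENNReal.ofReal (e.toReal - v₁) ≤ volume ({t : ℝ | ENNReal.ofReal t < e} ∩ Ioc v₁ v₂) := by
  rw [← Real.volume_Ioo]
  refine measure_mono ?_
  rintro t ⟨ht1, ht2⟩
  have hetop : e ≠ ∞ := ne_top_of_le_ne_top ENNReal.ofReal_ne_top he
  refine ⟨(ENNReal.ofReal_lt_iff_lt_toReal (h₁.trans ht1.le) hetop).2 ht2, ht1, ?_⟩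
  exact ht2.le.trans (ENNReal.toReal_le_of_le_ofReal h₂ he)

/-- **Appendix A, (A.1)**: under condition (K3), annulus integrals of `|k|^β` agree, up to a
bounded error, with the corresponding integrals of the decreasing rearrangement `(k^*(x,·))^β`. -/
theorem annulus_integral_eq_rearrangement_integral
    {M : Type*} [MetricSpace M] [MeasurableSpace M] [BorelSpace M] (μ : Measure M)
    (hfin : ∀ (x : M) (r : ℝ), μ (closedBall x r) ≠ ∞)
    (hcont : ∀ x : M, Continuous fun r : ℝ => ballVol μ x r)
    (β B : ℝ) (hβ : 1 < β) (hB : 0 ≤ B)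
    (k : M → M → ℝ) (hk_meas : Measurable (Function.uncurry k))
    (hK3a : ∀ x y : M, |k x y| ≤ B * ballVol μ x (dist x y) ^ (-(1 / β)))
    (hK3b : ∀ x y : M, |k x y| ≤ B * ballVol μ y (dist x y) ^ (-(1 / β))) :
    ∃ C : ℝ, 0 < C ∧ ∀ (x : M) (r₁ r₂ : ℝ), r₁ < r₂ → 0 < ballVol μ x r₁ →
      ballVol μ x r₁ < ballVol μ x r₂ →
      |(∫ y in {y | r₁ ≤ dist x y ∧ dist x y ≤ r₂}, |k x y| ^ β ∂μ)
        - ∫ t in Set.Ioc (ballVol μ x r₁) (ballVol μ x r₂),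
            (decRearr μ (fun y => k x y) t) ^ β| ≤ C := by
  have hβ0 : 0 < β := by linarith
  have hD : 0 ≤ B ^ β := Real.rpow_nonneg hB β
  refine ⟨2 * B ^ β + 1, by positivity, ?_⟩
  intro x r₁ r₂ hr hv₁ hv
  have hv₂ : 0 < ballVol μ x r₂ := hv₁.trans hv
  set A : Set M := {y | r₁ ≤ dist x y ∧ dist x y ≤ r₂} with hA
  have hF : ∀ y, |k x y| ^ β * ballVol μ x (dist x y) ≤ B ^ β := fun y =>
    rpow_mul_le hβ hB (abs_nonneg _) ENNReal.toReal_nonneg (hK3a x y)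
  have hball : ∀ r, μ (closedBall x r) = ENNReal.ofReal (ballVol μ x r) := fun r =>
    (ENNReal.ofReal_toReal (hfin x r)).symm
  have hsub : ∀ r s : ℝ, 0 < ballVol μ x r → 0 ≤ s → B ^ β / ballVol μ x r ≤ s →
      {y | s < |k x y| ^ β} ⊆ {y | dist x y < r} := fun r s h1 h2 h3 =>
    superlevel_subset μ hfin x hF h1 h2 h3
  have hlt_ball : ∀ r, {y | dist x y < r} ⊆ closedBall x r := fun r y hy => by
    rw [mem_closedBall, dist_comm]
    exact le_of_lt hy
  have hE : ∀ r s : ℝ, 0 < ballVol μ x r → 0 ≤ s → B ^ β / ballVol μ x r ≤ s →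
      μ {y | s < |k x y| ^ β} ≤ ENNReal.ofReal (ballVol μ x r) := fun r s h1 h2 h3 => by
    rw [← hball]
    exact measure_mono ((hsub r s h1 h2 h3).trans (hlt_ball r))
  set v₁ := ballVol μ x r₁ with hv₁d
  set v₂ := ballVol μ x r₂ with hv₂d
  have hAsub : A ⊆ closedBall x r₂ := fun y hy => by
    rw [mem_closedBall, dist_comm]
    exact hy.2
  have hμA : μ A ≤ ENNReal.ofReal v₂ := (measure_mono hAsub).trans (hball r₂).le
  have hAm : MeasurableSet A :=
    ((isClosed_le continuous_const (continuous_const.dist continuous_id)).inter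
      (isClosed_le (continuous_const.dist continuous_id) continuous_const)).measurableSet
  have hkm : Measurable fun y => k x y := hk_meas.comp measurable_prodMk_left
  have hFm : Measurable fun y => |k x y| ^ β := by fun_prop
  have hlevel : ∀ s : ℝ, 0 ≤ s → {y | s ^ (1 / β) < |k x y|} = {y | s < |k x y| ^ β} := by
    intro s hs
    ext y
    simp only [mem_ofPred_eq]
    rw [one_div, Real.rpow_inv_lt_iff_of_pos hs (abs_nonneg _) hβ0]
  have hne : ∀ t, v₁ ≤ t →
      ∃ u : ℝ, 0 ≤ u ∧ μ {y | u < |k x y|} ≤ ENNReal.ofReal t := by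
    intro t ht
    have h0 : 0 ≤ B ^ β / v₁ := by positivity
    refine ⟨(B ^ β / v₁) ^ (1 / β), by positivity, ?_⟩
    rw [hlevel _ h0]
    exact (hE r₁ _ hv₁ h0 le_rfl).trans (ENNReal.ofReal_le_ofReal ht)
  set G : ℝ → ℝ := decRearr μ (fun y => k x y) with hG
  have hG0 : ∀ t, 0 ≤ G t := fun t => Real.sInf_nonneg fun u hu => hu.1
  have hGlt : ∀ s t, 0 ≤ s → v₁ ≤ t →
      (s < G t ^ β ↔ ENNReal.ofReal t < μ {y | s < |k x y| ^ β}) := by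
    intro s t hs ht
    rw [← hlevel s hs, ← lt_decRearr_iff μ (fun y => k x y) (by positivity) (hne t ht), one_div,
      Real.rpow_inv_lt_iff_of_pos hs (hG0 t) hβ0]
  have hGanti : AntitoneOn (fun t => G t ^ β) (Ioc v₁ v₂) := by
    intro a ha b hb hab
    refine Real.rpow_le_rpow (hG0 b) ?_ hβ0.le
    exact csInf_le_csInf ⟨0, fun u hu => hu.1⟩ (hne a ha.1.le)
      fun u hu => ⟨hu.1, hu.2.trans (ENNReal.ofReal_le_ofReal hab)⟩
  have hGm : AEMeasurable (fun t => G t ^ β) (volume.restrict (Ioc v₁ v₂)) :=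
    aemeasurable_restrict_of_antitoneOn measurableSet_Ioc hGanti
  have hGpow : ∀ t, 0 ≤ G t ^ β := fun t => Real.rpow_nonneg (hG0 t) β
  have hF0 : ∀ y, 0 ≤ |k x y| ^ β := fun y => by positivity
  rw [integral_eq_lintegral_of_nonneg_ae (.of_forall hF0) hFm.aestronglyMeasurable,
    integral_eq_lintegral_of_nonneg_ae (.of_forall hGpow) hGm.aestronglyMeasurable,
    lintegral_eq_lintegral_meas_lt _ (.of_forall hF0) hFm.aemeasurable,
    lintegral_eq_lintegral_meas_lt _ (.of_forall hGpow) hGm]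
  -- The two layer-cake integrands are compared pointwise.
  have hm : ∀ s, μ.restrict A {y | s < |k x y| ^ β} = μ ({y | s < |k x y| ^ β} ∩ A) := fun s =>
    Measure.restrict_apply' hAm
  have hn : ∀ s, 0 ≤ s → volume.restrict (Ioc v₁ v₂) {t | s < G t ^ β}
      = volume ({t : ℝ | ENNReal.ofReal t < μ {y | s < |k x y| ^ β}} ∩ Ioc v₁ v₂) := by
    intro s hs
    rw [Measure.restrict_apply' measurableSet_Ioc]
    congr 1
    ext t
    simp only [mem_inter_iff, mem_ofPred_eq]
    exact and_congr_left fun ht => hGlt s t hs ht.1.le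
  have hpt : ∀ s, 0 ≤ s →
      μ.restrict A {y | s < |k x y| ^ β}
          ≤ volume.restrict (Ioc v₁ v₂) {t | s < G t ^ β} + errBound (B ^ β) v₁ v₂ s ∧
      volume.restrict (Ioc v₁ v₂) {t | s < G t ^ β}
          ≤ μ.restrict A {y | s < |k x y| ^ β} + errBound (B ^ β) v₁ v₂ s := by
    intro s hs
    rw [hm, hn s hs]
    rcases lt_or_ge s (B ^ β / v₂) with h2 | h2
    · have hg : ENNReal.ofReal v₂ ≤ errBound (B ^ β) v₁ v₂ s := by
        unfold errBound
        rw [indicator_of_mem (s := Iio (B ^ β / v₂)) h2]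
        exact le_add_self
      constructor
      · exact ((measure_mono inter_subset_right).trans (hμA.trans hg)).trans le_add_self
      · refine le_trans (le_trans (measure_mono inter_subset_right) ?_) (hg.trans le_add_self)
        rw [Real.volume_Ioc]
        exact ENNReal.ofReal_le_ofReal (by linarith)
    · have hE2 := hE r₂ s hv₂ hs h2
      have hEtop : μ {y | s < |k x y| ^ β} ≠ ∞ := ne_top_of_le_ne_top ENNReal.ofReal_ne_top hE2
      constructor
      · rcases lt_or_ge s (B ^ β / v₁) with h1 | h1
        · have hg : ENNReal.ofReal v₁ ≤ errBound (B ^ β) v₁ v₂ s := by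
            unfold errBound
            rw [indicator_of_mem (s := Iio (B ^ β / v₁)) h1]
            exact le_self_add
          calc μ ({y | s < |k x y| ^ β} ∩ A) ≤ μ {y | s < |k x y| ^ β} :=
                measure_mono inter_subset_left
            _ = ENNReal.ofReal ((μ {y | s < |k x y| ^ β}).toReal - v₁ + v₁) := by
                rw [sub_add_cancel, ENNReal.ofReal_toReal hEtop]
            _ ≤ ENNReal.ofReal ((μ {y | s < |k x y| ^ β}).toReal - v₁) + ENNReal.ofReal v₁ :=
                ENNReal.ofReal_add_le
            _ ≤ _ := add_le_add (le_volume hv₁.le hE2 hv₂.le) hg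
        · have hempty : {y | s < |k x y| ^ β} ∩ A = ∅ := by
            ext y
            simp only [mem_inter_iff, mem_empty_iff_false, iff_false, not_and]
            intro hy hyA
            exact absurd (hsub r₁ s hv₁ hs h1 hy) (not_lt.2 hyA.1)
          rw [hempty]
          simp
      · refine (volume_le_sub hEtop).trans (le_trans ?_ le_self_add)
        rw [ENNReal.ofReal_sub _ hv₁.le, ENNReal.ofReal_toReal hEtop, tsub_le_iff_right,
          ← hball r₁]
        refine le_trans (measure_mono ?_) (measure_union_le _ _)
        intro y hy
        by_cases hyr : dist x y ≤ r₁
        · right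
          rw [mem_closedBall, dist_comm]
          exact hyr
        · exact Or.inl ⟨hy, (not_le.1 hyr).le, le_of_lt (hsub r₂ s hv₂ hs h2 hy)⟩
  have hint := lintegral_errBound hD hv₁ hv₂
  have hfinal := abs_toReal_sub_le (c := ∫⁻ s in Ioi 0, errBound (B ^ β) v₁ v₂ s)
    (a := ∫⁻ s in Ioi 0, μ.restrict A {y | s < |k x y| ^ β})
    (b := ∫⁻ s in Ioi 0, volume.restrict (Ioc v₁ v₂) {t | s < G t ^ β})
    (by rw [hint]; exact ENNReal.ofReal_ne_top)
    (by
      rw [← lintegral_add_right _ (measurable_errBound _ _ _)]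
      exact setLIntegral_mono' measurableSet_Ioi fun s hs => (hpt s (le_of_lt hs)).1)
    (by
      rw [← lintegral_add_right _ (measurable_errBound _ _ _)]
      exact setLIntegral_mono' measurableSet_Ioi fun s hs => (hpt s (le_of_lt hs)).2)
  rw [hint, ENNReal.toReal_ofReal (by positivity)] at hfinal
  linarith
end
end

section
/- Let (M,d,μ) be a metric measure space in which every ball has finite measure and r ↦ V_x(r)=μ(B(x,r)) is continuous for every x. Then for every x ∈ M and every t with 0 < t < μ(M), the decreasing rearrangement of the function y ↦ 1/V_x(d(x,y)) evaluated at t equals 1/t. -/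
/-!
Write `V r = μ (closedBall x r)`. It is monotone and continuous, vanishes for `r < 0`, and its
supremum is `μ univ`, so by the intermediate value theorem it attains every value in `[0, μ univ)`
(`exists_closedBall_measure_eq`). Since `s < 1 / V (dist x y)` means `V (dist x y) < 1 / s`, the
claim is about the sublevel sets of `y ↦ V (dist x y)`. If `V r = t`, then `{V (dist x ·) < t}` lies
in `closedBall x r`, so `s = 1 / t` is admissible in the infimum. If `s < 1 / t`, choose `u` strictly
between `t` and `min (1 / s) (μ univ)` and `r` with `V r = u`: then `closedBall x r` lies in
`{V (dist x ·) < 1 / s}` and has measure `u > t`, so `s` is not admissible.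
-/

open MeasureTheory Metric Set
open scoped ENNReal

noncomputable section

/-- The decreasing rearrangement of an `ℝ≥0∞`-valued function:
`g^*(t) = inf{s : μ{g > s} ≤ t}`. -/
def decRearrE {M : Type*} [MeasurableSpace M] (μ : Measure M) (g : M → ℝ≥0∞) (t : ℝ) : ℝ≥0∞ :=
  sInf {s : ℝ≥0∞ | μ {x | s < g x} ≤ ENNReal.ofReal t}

theorem exists_closedBall_measure_eq
    {M : Type*} [MetricSpace M] [MeasurableSpace M] [BorelSpace M] (μ : Measure M)
    (hfin : ∀ (x : M) (r : ℝ), μ (closedBall x r) ≠ ∞)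
    (hcont : ∀ x : M, Continuous fun r : ℝ => (μ (closedBall x r)).toReal)
    (x : M) (u : ℝ≥0∞) (hu : u < μ Set.univ) : ∃ r : ℝ, μ (closedBall x r) = u := by
  have hu_top : u ≠ ∞ := ne_top_of_lt hu
  obtain ⟨n, hn⟩ : ∃ n : ℕ, u < μ (closedBall x n) := by
    have hmono : Monotone fun n : ℕ => closedBall x (n : ℝ) := fun a b hab =>
      closedBall_subset_closedBall (Nat.cast_le.mpr hab)
    rw [← iUnion_closedBall_nat x, hmono.measure_iUnion] at hu
    exact lt_iSup_iff.mp hu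
  have hneg : (μ (closedBall x (-1))).toReal ≤ u.toReal := by
    simp
  obtain ⟨r, hr⟩ := mem_range_of_exists_le_of_exists_ge (hcont x) ⟨-1, hneg⟩
    ⟨n, ENNReal.toReal_mono (hfin x n) hn.le⟩
  exact ⟨r, (ENNReal.toReal_eq_toReal_iff' (hfin x r) hu_top).mp hr⟩

/-- **Identity (2.6)**: on a metric measure space with finite, continuously varying ball volumes,
the decreasing rearrangement of `y ↦ 1/V_x(d(x,y))` at `t` equals `1/t`, for `0 < t < μ(M)`. -/
theorem rearrangement_inv_ball_volume
    {M : Type*} [MetricSpace M] [MeasurableSpace M] [BorelSpace M] (μ : Measure M)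
    (hfin : ∀ (x : M) (r : ℝ), μ (closedBall x r) ≠ ∞)
    (hcont : ∀ x : M, Continuous fun r : ℝ => (μ (closedBall x r)).toReal) :
    ∀ (x : M) (t : ℝ), 0 < t → ENNReal.ofReal t < μ Set.univ →
      decRearrE μ (fun y => (μ (closedBall x (dist x y)))⁻¹) t = ENNReal.ofReal (1 / t) := by
  intro x t ht htM
  have hinv : ENNReal.ofReal (1 / t) = (ENNReal.ofReal t)⁻¹ := by
    rw [one_div, ENNReal.ofReal_inv_of_pos ht]
  rw [hinv, decRearrE]
  apply le_antisymm
  · apply sInf_le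
    obtain ⟨r, hr⟩ := exists_closedBall_measure_eq μ hfin hcont x _ htM
    rw [mem_ofPred_eq, ← hr]
    refine measure_mono fun y hy => ?_
    rw [mem_ofPred_eq, ENNReal.inv_lt_inv] at hy
    by_contra hyr
    rw [mem_closedBall', not_le] at hyr
    exact hy.not_ge (measure_mono (closedBall_subset_closedBall hyr.le))
  · refine le_sInf fun s hs => ?_
    by_contra! hlt
    obtain ⟨u, htu, hu⟩ := exists_between
      (lt_min (ENNReal.lt_inv_iff_lt_inv.mp hlt) htM)
    obtain ⟨hus, huM⟩ := lt_min_iff.mp hu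
    obtain ⟨r, hr⟩ := exists_closedBall_measure_eq μ hfin hcont x u huM
    have hsub : closedBall x r ⊆ {y | s < (μ (closedBall x (dist x y)))⁻¹} := fun y hy => by
      rw [mem_ofPred_eq, ENNReal.lt_inv_iff_lt_inv]
      exact (measure_mono (closedBall_subset_closedBall (mem_closedBall'.mp hy))).trans_lt
        (hr ▸ hus)
    exact htu.not_ge (hr ▸ (measure_mono hsub).trans hs)
end
end

section
/- Let n ≥ 2 and p ≥ 1. There exists a constant C such that for every u ∈ C_c^∞(ℝ^n) with ‖∇u‖_n ≤ 1 one has ∫_{{|u| ≥ 1}} exp[ γ_{n,1}|u|^{n/(n−1)} ] / |u|^{p/(n−1)} dx ≤ C‖u‖_p^p, where γ_{n,1} = n·ω_{n−1}^{1/(n−1)} and ω_{n−1} is the surface measure of the unit sphere in ℝ^n. -/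
/-!
The proof avoids symmetrization and works with the distribution function `N(a) = |{c|u| ≥ a}|`, where
`c = n |B|^{1/n}` is the isoperimetric constant. Since `c^{n/(n-1)} = γ_{n,1}`, the function `w = c|u|`
turns the exponential weight into `exp (w^{n/(n-1)})`.

*Isoperimetry.* The Prékopa–Leindler inequality (`prekopa_leindler`) gives Brunn–Minkowski and hence
the isoperimetric bound for `ε`-neighbourhoods of compact sets (`volume_neighbourhood`). The
`ε`-neighbourhood of `{|u| ≥ τ}` lies in `{|u| + ε(|∇u| + η) ≥ τ}`; integrating over `τ` replaces the
co-area formula and gives `c (t - s) |{|u| ≥ t}|^{(n-1)/n} ≤ ∫_{s ≤ |u| < t} |∇u|` (`level_gradient`).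

*Capacity.* Hölder's inequality on thin layers, summed over a partition whose mesh tends to zero, gives
`t - s ≤ (G(t) - G(s))^{1/n} (log (N(s)/N(t)))^{(n-1)/n}` for `w`, where `G` is the energy below a
level (`capacity`).

*Growth.* Comparing a height `a` with the single level `κ a^{-1/(n-1)}`, where Chebyshev's inequality
bounds `N` through `M = ‖w‖_p^p`, shows that the deficit `F`, defined by
`exp (a^{n/(n-1)}) a^{-p/(n-1)} N(a) = M exp (-F(a))`, is bounded below, and that `F` is large if the
energy below `a` stays away from `1` (`LevelData.growth`, `LevelData.le_deficit`).

*Summation over deficit levels.* With `m(x) = N(w(x))` the integrand equals `M exp (-F(w)) / m`, up to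
a constant factor. The function `m` is a rank function, `|{m ≤ c}| ≤ c`, so `1/m` has integral
`O(1 + L)` over a set on which `log m` oscillates by at most `L` (`lintegral_inv_rank_le`). On the set
where `F` is at most `X`, split into small and large heights, `log m` oscillates by `O(X)`
(`LevelData.close_small`, `LevelData.close_large`). The sum of `exp (-j) (1 + j)` over the deficit
levels `j` converges, which gives the bound (`lintegral_deficit_le`).
-/

open MeasureTheory Metric
open scoped ENNReal

noncomputable section

/-- `ω_{n-1} = 2π^{n/2}/Γ(n/2)`, the surface measure of the unit sphere in `ℝⁿ`. -/
def omegaSphere (n : ℕ) : ℝ := 2 * Real.pi ^ ((n : ℝ) / 2) / Real.Gamma ((n : ℝ) / 2)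

/-- `γ_{n,1} = n ω_{n-1}^{1/(n-1)}`. -/
def gammaN1 (n : ℕ) : ℝ := n * omegaSphere n ^ (1 / ((n : ℝ) - 1))

/-! ### The Prékopa–Leindler and Brunn–Minkowski inequalities -/

lemma volume_add_le_of_isCompact {K L : Set ℝ} (hK : IsCompact K) (hL : IsCompact L)
    (hK0 : K.Nonempty) (hL0 : L.Nonempty) {C : Set ℝ} (hC : ∀ x ∈ K, ∀ y ∈ L, x + y ∈ C) :
    volume K + volume L ≤ volume C := by
  obtain ⟨k, hkK, hk⟩ := hK.exists_isGreatest hK0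
  obtain ⟨l, hlL, hl⟩ := hL.exists_isLeast hL0
  -- `K + l` and `k + L` meet only in the point `k + l`
  have hK' : MeasurableSet ((fun x => x + (-l)) ⁻¹' K) :=
    measurable_add_const (-l) hK.measurableSet
  have hL' : MeasurableSet ((fun x => x + (-k)) ⁻¹' L) :=
    measurable_add_const (-k) hL.measurableSet
  have h1 := measure_union_add_inter (μ := (volume : Measure ℝ)) ((fun x => x + (-l)) ⁻¹' K) hL'
  rw [measure_preimage_add_right, measure_preimage_add_right] at h1
  have h2 : volume ((fun x => x + (-l)) ⁻¹' K ∩ (fun x => x + (-k)) ⁻¹' L) = 0 := by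
    refine measure_mono_null (t := {k + l}) ?_ (by simp)
    rintro x ⟨hx1, hx2⟩
    have := hk hx1
    have := hl hx2
    simp only [Set.mem_singleton_iff]
    linarith
  rw [h2, add_zero] at h1
  rw [← h1]
  refine measure_mono ?_
  rintro x (hx | hx)
  · simpa using hC _ hx _ hlL
  · simpa using hC _ hkK _ hx

/-- The one-dimensional Brunn–Minkowski inequality `|A| + |B| ≤ |A + B|`. -/
lemma volume_add_le {A B : Set ℝ} (hA : MeasurableSet A) (hB : MeasurableSet B)
    (hA0 : A.Nonempty) (hB0 : B.Nonempty) {C : Set ℝ} (hC : ∀ x ∈ A, ∀ y ∈ B, x + y ∈ C) :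
    volume A + volume B ≤ volume C := by
  obtain ⟨a, ha⟩ := hA0
  obtain ⟨b, hb⟩ := hB0
  rw [hA.measure_eq_iSup_isCompact, hB.measure_eq_iSup_isCompact]
  simp only [iSup_and']
  refine ENNReal.biSup_add_biSup_le' ⟨∅, by simp⟩ ⟨∅, by simp⟩ ?_
  rintro K ⟨hKA, hK⟩ L ⟨hLB, hL⟩
  refine le_trans (add_le_add (measure_mono (Set.subset_insert a K))
    (measure_mono (Set.subset_insert b L))) ?_
  refine volume_add_le_of_isCompact (hK.insert a) (hL.insert b) (by simp) (by simp) ?_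
  intro x hx y hy
  exact hC x (Set.insert_subset ha hKA hx) y (Set.insert_subset hb hLB hy)

lemma ennreal_geom_mean_le {a b : ℝ} (ha : 0 < a) (hb : 0 < b) (hab : a + b = 1) (x y : ℝ≥0∞) :
    x ^ a * y ^ b ≤ ENNReal.ofReal a * x + ENNReal.ofReal b * y := by
  rcases eq_or_ne x ∞ with rfl | hx
  · rw [ENNReal.mul_top (by simpa using ha)]; simp
  rcases eq_or_ne y ∞ with rfl | hy
  · rw [ENNReal.mul_top (by simpa using hb)]; simp
  lift x to NNReal using hx
  lift y to NNReal using hy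
  have := NNReal.geom_mean_le_arith_mean2_weighted a.toNNReal b.toNNReal x y
    (by rw [← Real.toNNReal_add ha.le hb.le, hab, Real.toNNReal_one])
  rw [Real.coe_toNNReal _ ha.le, Real.coe_toNNReal _ hb.le] at this
  rw [← ENNReal.coe_rpow_of_nonneg _ ha.le, ← ENNReal.coe_rpow_of_nonneg _ hb.le]
  rw [ENNReal.ofReal, ENNReal.ofReal]
  exact_mod_cast this

lemma volume_preimage_mul_inv {a : ℝ} (ha : 0 < a) (A : Set ℝ) :
    volume ((fun x => x * a⁻¹) ⁻¹' A) = ENNReal.ofReal a * volume A := by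
  rw [Real.volume_preimage_mul_right (by positivity), inv_inv, abs_of_pos ha]

/-- Prékopa–Leindler on the line for functions whose supremum is `1`: there the superlevel sets at
every level below `1` are nonempty, so the one-dimensional Brunn–Minkowski inequality applies to
all of them and the arithmetic mean of the integrals is a lower bound. -/
lemma prekopa_leindler_normalized {a b : ℝ} (ha : 0 < a) (hb : 0 < b)
    {f g h : ℝ → ℝ≥0∞} (hf : Measurable f) (hg : Measurable g)
    (hh : Measurable h) (hfS : ⨆ x, f x = 1) (hgS : ⨆ x, g x = 1)
    (hab : a + b = 1)
    (H : ∀ x y, f x ^ a * g y ^ b ≤ h (a * x + b * y)) :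
    ENNReal.ofReal a * (∫⁻ x, f x) + ENNReal.ofReal b * (∫⁻ x, g x) ≤ ∫⁻ x, h x := by
  have hf1 : ∀ x, f x ≤ 1 := fun x => hfS ▸ le_iSup f x
  have hg1 : ∀ x, g x ≤ 1 := fun x => hgS ▸ le_iSup g x
  have lay : ∀ k : ℝ → ℝ≥0∞, Measurable k → (∀ x, k x ≤ 1) →
      ∫⁻ x, k x = ∫⁻ t in Set.Ioo (0 : ℝ) 1, volume {x | ENNReal.ofReal t < k x} := by
    intro k hk hk1
    have hkt : ∀ x, k x ≠ ∞ := fun x => ne_top_of_le_ne_top (by simp) (hk1 x)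
    calc ∫⁻ x, k x = ∫⁻ x, ENNReal.ofReal (k x).toReal := by
          simp_rw [ENNReal.ofReal_toReal (hkt _)]
      _ = ∫⁻ t in Set.Ioi (0 : ℝ), volume {x | t < (k x).toReal} :=
          lintegral_eq_lintegral_meas_lt _ (ae_of_all _ fun x => ENNReal.toReal_nonneg)
            hk.ennreal_toReal.aemeasurable
      _ = ∫⁻ t in Set.Ioi (0 : ℝ), (Set.Iio (1 : ℝ)).indicator
            (fun t => volume {x | ENNReal.ofReal t < k x}) t := by
          refine setLIntegral_congr_fun measurableSet_Ioi fun t ht => ?_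
          have e : {x | t < (k x).toReal} = {x | ENNReal.ofReal t < k x} := by
            ext x
            exact (ENNReal.ofReal_lt_iff_lt_toReal (le_of_lt ht) (hkt x)).symm
          by_cases h1 : t < 1
          · simp only [Set.indicator_of_mem (show t ∈ Set.Iio 1 from h1), e]
          · rw [Set.indicator_of_notMem (by simpa using h1)]
            have : {x | t < (k x).toReal} = ∅ := by
              ext x
              have : (k x).toReal ≤ 1 := ENNReal.toReal_le_of_le_ofReal zero_le_one (by simpa using hk1 x)
              simp only [Set.mem_ofPred_eq, Set.mem_empty_iff_false, iff_false, not_lt]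
              linarith
            simp [this]
      _ = _ := by
          rw [setLIntegral_indicator measurableSet_Iio, Set.inter_comm, Set.Ioi_inter_Iio]
  have hanti : ∀ k : ℝ → ℝ≥0∞, Measurable fun t : ℝ => volume {x | ENNReal.ofReal t < k x} := by
    intro k
    refine Antitone.measurable fun s t hst => measure_mono fun x hx => ?_
    exact lt_of_le_of_lt (ENNReal.ofReal_le_ofReal hst) hx
  calc ENNReal.ofReal a * (∫⁻ x, f x) + ENNReal.ofReal b * (∫⁻ x, g x)
      = ∫⁻ t in Set.Ioo (0 : ℝ) 1, (ENNReal.ofReal a * volume {x | ENNReal.ofReal t < f x} +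
          ENNReal.ofReal b * volume {x | ENNReal.ofReal t < g x}) := by
        rw [lay f hf hf1, lay g hg hg1, lintegral_add_left ((hanti f).const_mul _),
          lintegral_const_mul _ (hanti f), lintegral_const_mul _ (hanti g)]
    _ ≤ ∫⁻ t in Set.Ioo (0 : ℝ) 1, volume {x | ENNReal.ofReal t < min (h x) 1} := by
        refine setLIntegral_mono' measurableSet_Ioo fun t ht => ?_
        have ht1 : ENNReal.ofReal t < 1 := by simpa using ht.2
        obtain ⟨x0, hx0⟩ : ∃ x, ENNReal.ofReal t < f x := by rwa [← hfS, lt_iSup_iff] at ht1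
        obtain ⟨y0, hy0⟩ : ∃ x, ENNReal.ofReal t < g x := by rwa [← hgS, lt_iSup_iff] at ht1
        rw [← volume_preimage_mul_inv ha, ← volume_preimage_mul_inv hb]
        refine volume_add_le
          ((measurable_mul_const _) (measurableSet_lt measurable_const hf))
          ((measurable_mul_const _) (measurableSet_lt measurable_const hg))
          ⟨x0 * a, ?_⟩ ⟨y0 * b, ?_⟩ ?_
        · simpa [mul_assoc, ha.ne'] using hx0
        · simpa [mul_assoc, hb.ne'] using hy0
        · intro x hx y hy
          have hx' : ENNReal.ofReal t < f (x * a⁻¹) := hx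
          have hy' : ENNReal.ofReal t < g (y * b⁻¹) := hy
          have key := H (x * a⁻¹) (y * b⁻¹)
          rw [show a * (x * a⁻¹) + b * (y * b⁻¹) = x + y by field_simp] at key
          refine lt_min (lt_of_lt_of_le ?_ key) ht1
          calc ENNReal.ofReal t = ENNReal.ofReal t ^ a * ENNReal.ofReal t ^ b := by
                rw [← ENNReal.rpow_add_of_nonneg _ _ ha.le hb.le, hab, ENNReal.rpow_one]
            _ < _ := ENNReal.mul_lt_mul (ENNReal.rpow_lt_rpow hx' ha)
                  (ENNReal.rpow_lt_rpow hy' hb)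
    _ = ∫⁻ x, min (h x) 1 := (lay _ (hh.min measurable_const) fun x => min_le_right _ _).symm
    _ ≤ _ := lintegral_mono fun x => min_le_left _ _

/-- Bounded functions reduce to the normalized case after division by their suprema. -/
lemma prekopa_leindler_bounded {a b : ℝ} (ha : 0 < a) (hb : 0 < b) (hab : a + b = 1)
    {f g h : ℝ → ℝ≥0∞} (hf : Measurable f) (hg : Measurable g)
    (hh : Measurable h) (hfS : ⨆ x, f x ≠ ∞) (hgS : ⨆ x, g x ≠ ∞)
    (H : ∀ x y, f x ^ a * g y ^ b ≤ h (a * x + b * y)) :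
    (∫⁻ x, f x) ^ a * (∫⁻ x, g x) ^ b ≤ ∫⁻ x, h x := by
  set S := ⨆ x, f x with hS
  set T := ⨆ x, g x with hT
  rcases eq_or_ne S 0 with h0 | hS0
  · have : ∀ x, f x = 0 := by simpa [S] using h0
    simp [this, ha]
  rcases eq_or_ne T 0 with h0 | hT0
  · have : ∀ x, g x = 0 := by simpa [T] using h0
    simp [this, hb]
  have hSa : S ^ a ≠ 0 := by simp [hS0, hfS]
  have hTb : T ^ b ≠ 0 := by simp [hT0, hgS]
  have hSa' : S ^ a ≠ ∞ := by simp [hfS, hS0]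
  have hTb' : T ^ b ≠ ∞ := by simp [hgS, hT0]
  have key := prekopa_leindler_normalized ha hb (f := fun x => S⁻¹ * f x) (g := fun x => T⁻¹ * g x)
    (h := fun x => (S ^ a * T ^ b)⁻¹ * h x) (hf.const_mul _) (hg.const_mul _) (hh.const_mul _)
    (by rw [← ENNReal.mul_iSup, ENNReal.inv_mul_cancel hS0 hfS])
    (by rw [← ENNReal.mul_iSup, ENNReal.inv_mul_cancel hT0 hgS]) hab
    (by
      intro x y
      rw [ENNReal.mul_rpow_of_nonneg _ _ ha.le, ENNReal.mul_rpow_of_nonneg _ _ hb.le,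
        ENNReal.mul_inv (Or.inl hSa) (Or.inr hTb), ENNReal.inv_rpow, ENNReal.inv_rpow]
      calc _ = (S ^ a)⁻¹ * (T ^ b)⁻¹ * (f x ^ a * g y ^ b) := by ring
        _ ≤ _ := by gcongr; exact H x y)
  have key2 := (ennreal_geom_mean_le ha hb hab _ _).trans key
  rw [lintegral_const_mul _ hf, lintegral_const_mul _ hg, lintegral_const_mul _ hh,
    ENNReal.mul_rpow_of_nonneg _ _ ha.le, ENNReal.mul_rpow_of_nonneg _ _ hb.le,
        ENNReal.mul_inv (Or.inl hSa) (Or.inr hTb), ENNReal.inv_rpow, ENNReal.inv_rpow] at key2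
  calc (∫⁻ x, f x) ^ a * (∫⁻ x, g x) ^ b
      = (S ^ a * (S ^ a)⁻¹) * (T ^ b * (T ^ b)⁻¹) * ((∫⁻ x, f x) ^ a * (∫⁻ x, g x) ^ b) := by
        rw [ENNReal.mul_inv_cancel hSa hSa', ENNReal.mul_inv_cancel hTb hTb']; simp
    _ = (S ^ a * T ^ b) * ((S ^ a)⁻¹ * (∫⁻ x, f x) ^ a * ((T ^ b)⁻¹ * (∫⁻ x, g x) ^ b)) := by ring
    _ ≤ (S ^ a * T ^ b) * ((S ^ a)⁻¹ * (T ^ b)⁻¹ * ∫⁻ x, h x) := by gcongr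
    _ = (S ^ a * (S ^ a)⁻¹) * (T ^ b * (T ^ b)⁻¹) * ∫⁻ x, h x := by ring
    _ = _ := by
        rw [ENNReal.mul_inv_cancel hSa hSa', ENNReal.mul_inv_cancel hTb hTb']; simp

lemma exists_lt_lintegral_min {f : ℝ → ℝ≥0∞} (hf : Measurable f) {a : ℝ} (ha : 0 < a)
    {r : ℝ≥0∞} (hr : r < (∫⁻ x, f x) ^ a) :
    ∃ k : ℕ, r < (∫⁻ x, min (f x) k) ^ a := by
  have h1 : ∫⁻ x, f x = ⨆ k : ℕ, ∫⁻ x, min (f x) k := by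
    rw [← lintegral_iSup (fun k => hf.min measurable_const)
      (fun i j hij x => min_le_min_left _ (by exact_mod_cast hij))]
    refine lintegral_congr fun x => ?_
    rw [← inf_iSup_eq, ENNReal.iSup_natCast]
    simp
  have h2 : r ^ a⁻¹ < ∫⁻ x, f x := by
    rwa [ENNReal.rpow_inv_lt_iff ha]
  rw [h1, lt_iSup_iff] at h2
  obtain ⟨k, hk⟩ := h2
  exact ⟨k, by rwa [ENNReal.rpow_inv_lt_iff ha] at hk⟩

/-- The Prékopa–Leindler inequality on the line. -/
lemma prekopa_leindler_one {a b : ℝ} (ha : 0 < a) (hb : 0 < b) (hab : a + b = 1)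
    {f g h : ℝ → ℝ≥0∞} (hf : Measurable f) (hg : Measurable g) (hh : Measurable h)
    (H : ∀ x y, f x ^ a * g y ^ b ≤ h (a * x + b * y)) :
    (∫⁻ x, f x) ^ a * (∫⁻ x, g x) ^ b ≤ ∫⁻ x, h x := by
  refine ENNReal.mul_le_of_forall_lt fun r hr s hs => ?_
  obtain ⟨k, hk⟩ := exists_lt_lintegral_min hf ha hr
  obtain ⟨l, hl⟩ := exists_lt_lintegral_min hg hb hs
  refine (mul_le_mul' hk.le hl.le).trans ?_
  refine prekopa_leindler_bounded ha hb hab (hf.min measurable_const) (hg.min measurable_const) hh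
    ?_ ?_ ?_
  · exact ne_top_of_le_ne_top (ENNReal.natCast_ne_top k) (iSup_le fun x => min_le_right _ _)
  · exact ne_top_of_le_ne_top (ENNReal.natCast_ne_top l) (iSup_le fun x => min_le_right _ _)
  · intro x y
    refine le_trans ?_ (H x y)
    gcongr <;> exact min_le_left _ _

/-- The Prékopa–Leindler inequality in `ℝⁿ`, by induction on the dimension: the marginals in
the first coordinate satisfy the one-dimensional hypothesis. -/
lemma prekopa_leindler {a b : ℝ} (ha : 0 < a) (hb : 0 < b) (hab : a + b = 1) (n : ℕ) :
    ∀ {f g h : (Fin n → ℝ) → ℝ≥0∞}, Measurable f → Measurable g → Measurable h →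
    (∀ x y, f x ^ a * g y ^ b ≤ h (a • x + b • y)) →
    (∫⁻ x, f x) ^ a * (∫⁻ x, g x) ^ b ≤ ∫⁻ x, h x := by
  induction n with
  | zero =>
    intro f g h hf hg hh H
    rw [volume_pi, Measure.pi_of_empty _ (0 : Fin 0 → ℝ)]
    simp only [lintegral_dirac]
    simpa using H 0 0
  | succ n ih =>
    intro f g h hf hg hh H
    set e := MeasurableEquiv.piFinSuccAbove (fun _ : Fin (n + 1) => ℝ) 0 with he
    have fub : ∀ k : (Fin (n + 1) → ℝ) → ℝ≥0∞, Measurable k →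
        ∫⁻ x, k x = ∫⁻ x : ℝ, ∫⁻ y : Fin n → ℝ, k (e.symm (x, y)) := by
      intro k hk
      rw [← (volume_preserving_piFinSuccAbove (fun _ : Fin (n + 1) => ℝ) 0).symm.lintegral_comp hk]
      exact lintegral_prod _ (hk.comp e.symm.measurable).aemeasurable
    have hm : ∀ k : (Fin (n + 1) → ℝ) → ℝ≥0∞, Measurable k →
        Measurable fun z : ℝ × (Fin n → ℝ) => k (e.symm z) :=
      fun k hk => hk.comp e.symm.measurable
    rw [fub f hf, fub g hg, fub h hh]
    refine prekopa_leindler_one ha hb hab (hm f hf).lintegral_prod_right'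
      (hm g hg).lintegral_prod_right' (hm h hh).lintegral_prod_right' fun x y => ?_
    refine ih ((hm f hf).comp measurable_prodMk_left) ((hm g hg).comp measurable_prodMk_left)
      ((hm h hh).comp measurable_prodMk_left) fun x' y' => ?_
    refine (H _ _).trans (le_of_eq ?_)
    congr 1
    ext i
    refine Fin.cases ?_ (fun j => ?_) i <;>
      simp [he, MeasurableEquiv.piFinSuccAbove]

/-- Multiplicative Brunn–Minkowski inequality in Euclidean space. -/
lemma brunn_minkowski_mul {a b : ℝ} (ha : 0 < a) (hb : 0 < b) (hab : a + b = 1) {n : ℕ}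
    {A B C : Set (EuclideanSpace ℝ (Fin n))} (hA : MeasurableSet A) (hB : MeasurableSet B)
    (hC : MeasurableSet C) (H : ∀ x ∈ A, ∀ y ∈ B, a • x + b • y ∈ C) :
    volume A ^ a * volume B ^ b ≤ volume C := by
  have hp := (EuclideanSpace.volume_preserving_symm_measurableEquiv_toLp (Fin n)).symm
  set e := MeasurableEquiv.toLp 2 (Fin n → ℝ)
  have hv : ∀ D : Set (EuclideanSpace ℝ (Fin n)), MeasurableSet D →
      volume D = ∫⁻ x, (e ⁻¹' D).indicator 1 x := by
    intro D hD
    rw [lintegral_indicator_one (e.measurable hD)]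
    exact (hp.measure_preimage hD.nullMeasurableSet).symm
  rw [hv A hA, hv B hB, hv C hC]
  refine prekopa_leindler ha hb hab n (measurable_one.indicator (e.measurable hA))
    (measurable_one.indicator (e.measurable hB)) (measurable_one.indicator (e.measurable hC))
    fun x y => ?_
  by_cases hx : x ∈ e ⁻¹' A
  · by_cases hy : y ∈ e ⁻¹' B
    · have : a • x + b • y ∈ e ⁻¹' C := H _ hx _ hy
      simp [hx, hy, this]
    · simp [hy, hb]
  · simp [hx, ha]

/-! ### The isoperimetric inequality -/

/-- The volume of the unit ball of `ℝⁿ`. -/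
def unitBallVolume (n : ℕ) : ℝ := √Real.pi ^ n / Real.Gamma (n / 2 + 1)

lemma unitBallVolume_pos (n : ℕ) : 0 < unitBallVolume n := by
  have := Real.pi_pos
  have : 0 < Real.Gamma (n / 2 + 1) := Real.Gamma_pos_of_pos (by positivity)
  unfold unitBallVolume
  positivity

/-- The isoperimetric constant `n |B|^{1/n}`. -/
def isoConst (n : ℕ) : ℝ := n * unitBallVolume n ^ (1 / (n : ℝ))

lemma isoConst_pos {n : ℕ} (hn : 2 ≤ n) : 0 < isoConst n := by
  have := unitBallVolume_pos n
  have : (0 : ℝ) < n := by exact_mod_cast (by omega : 0 < n)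
  unfold isoConst
  positivity

open scoped Pointwise in
/-- Isoperimetric inequality for the `ε`-neighbourhood of a compact set. Brunn–Minkowski is used
with the weights for which `A` and the ball, after rescaling, have equal volume. -/
lemma volume_neighbourhood {n : ℕ} (hn : 2 ≤ n) {A C : Set (EuclideanSpace ℝ (Fin n))}
    (hA : IsCompact A) (hC : MeasurableSet C) {ε : ℝ} (hε : 0 < ε)
    (H : ∀ x ∈ A, ∀ y, dist y x ≤ ε → y ∈ C) :
    volume A + ENNReal.ofReal (ε * isoConst n * volume.real A ^ (((n : ℝ) - 1) / n)) ≤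
      volume C := by
  have hn0 : (0 : ℝ) < n := by exact_mod_cast (by omega : 0 < n)
  have hn1 : (1 : ℝ) < n := by exact_mod_cast (by omega : 1 < n)
  have : Nonempty (Fin n) := ⟨⟨0, by omega⟩⟩
  set v := unitBallVolume n with hv
  have hvp : 0 < v := unitBallVolume_pos n
  set m := volume.real A with hm
  have hAtop : volume A ≠ ∞ := hA.measure_lt_top.ne
  have hAm : volume A = ENNReal.ofReal m := (ofReal_measureReal hAtop).symm
  have hAC : A ⊆ C := fun x hx => H x hx x (by simpa using hε.le)
  rcases (measureReal_nonneg : 0 ≤ volume.real A).eq_or_lt with h0 | hmp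
  · rw [← hm] at h0
    rw [← h0, Real.zero_rpow (by have := sub_pos.2 hn1; positivity)]
    simpa using measure_mono hAC
  rw [← hm] at hmp
  set ρ := (m / v) ^ (1 / (n : ℝ)) with hρ
  have hρp : 0 < ρ := by positivity
  have hρn : v * ρ ^ n = m := by
    rw [hρ, ← Real.rpow_natCast, ← Real.rpow_mul (by positivity), one_div_mul_cancel hn0.ne',
      Real.rpow_one]
    field_simp
  set a := ρ / (ρ + ε) with ha
  set b := ε / (ρ + ε) with hb
  have hap : 0 < a := by positivity
  have hbp : 0 < b := by positivity
  have hab : a + b = 1 := by rw [ha, hb]; field_simp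
  have hV1 : volume (a⁻¹ • A) = ENNReal.ofReal ((a⁻¹) ^ n * m) := by
    rw [Measure.addHaar_smul, hAm, abs_of_pos (by positivity), ← ENNReal.ofReal_mul (by positivity)]
    simp
  have hV2 : volume (closedBall (0 : EuclideanSpace ℝ (Fin n)) (a⁻¹ * ρ)) =
      ENNReal.ofReal ((a⁻¹) ^ n * m) := by
    rw [EuclideanSpace.volume_closedBall, ← ENNReal.ofReal_pow (by positivity),
      ← ENNReal.ofReal_mul (by positivity), Fintype.card_fin, ← hρn, hv, unitBallVolume]
    congr 1
    ring
  have key := brunn_minkowski_mul hap hbp hab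
    (hA.smul a⁻¹).measurableSet (isClosed_closedBall (x := (0 : EuclideanSpace ℝ (Fin n)))
      (ε := a⁻¹ * ρ)).measurableSet hC (by
      rintro _ ⟨x, hx, rfl⟩ y hy
      refine H x hx _ ?_
      rw [dist_eq_norm]
      have e : a • a⁻¹ • x = x := by rw [smul_smul, mul_inv_cancel₀ hap.ne', one_smul]
      simp only [e, add_sub_cancel_left, norm_smul, Real.norm_of_nonneg hbp.le]
      have hy' : ‖y‖ ≤ a⁻¹ * ρ := by simpa using hy
      calc b * ‖y‖ ≤ b * (a⁻¹ * ρ) := by gcongr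
        _ = ε := by rw [ha, hb]; field_simp)
  rw [hV1, hV2, ← ENNReal.rpow_add_of_nonneg _ _ hap.le hbp.le, hab, ENNReal.rpow_one] at key
  refine le_trans ?_ key
  rw [hAm, ← ENNReal.ofReal_add hmp.le (by have := isoConst_pos hn; positivity)]
  refine ENNReal.ofReal_le_ofReal ?_
  have h1 : a⁻¹ = 1 + ε / ρ := by rw [ha]; field_simp
  have h2 : 1 + (n : ℝ) * (ε / ρ) ≤ (1 + ε / ρ) ^ n :=
    one_add_mul_le_pow (by have : 0 < ε / ρ := by positivity
                           linarith) n
  have h3 : m / ρ = v ^ (1 / (n : ℝ)) * m ^ (((n : ℝ) - 1) / n) := by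
    rw [hρ, Real.div_rpow hmp.le hvp.le, sub_div, div_self hn0.ne', Real.rpow_sub hmp, Real.rpow_one]
    field_simp
  calc m + ε * isoConst n * m ^ (((n : ℝ) - 1) / n)
      = m + ε * n * (m / ρ) := by rw [h3, isoConst]; ring
    _ = (1 + (n : ℝ) * (ε / ρ)) * m := by field_simp
    _ ≤ _ := by rw [h1]; gcongr

/-! ### The gradient on a layer between two levels -/

section Level

variable {n : ℕ} {u : EuclideanSpace ℝ (Fin n) → ℝ}

/-- Uniform first-order bound: on small scales `u` grows from `y` at most at the rate `|∇u(y)| + η`. -/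
lemma exists_modulus (hu : ContDiff ℝ (⊤ : ℕ∞) u) (hc : HasCompactSupport u) {η : ℝ} (hη : 0 < η) :
    ∃ ε0 > 0, ∀ ε ≤ ε0, ∀ x y, dist y x ≤ ε → |u x| ≤ |u y| + ε * (‖fderiv ℝ u y‖ + η) := by
  have hd : Differentiable ℝ u := hu.differentiable (by simp)
  have hD : Continuous (fderiv ℝ u) := hu.continuous_fderiv (by simp)
  have hUC := (hc.fderiv ℝ).uniformContinuous_of_continuous hD
  rw [Metric.uniformContinuous_iff] at hUC
  obtain ⟨δ, hδ, h⟩ := hUC η hη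
  refine ⟨δ / 2, by positivity, fun ε hε x y hxy => ?_⟩
  have hb : ∀ z ∈ closedBall y ε, ‖fderiv ℝ u z‖ ≤ ‖fderiv ℝ u y‖ + η := by
    intro z hz
    have := h (a := z) (b := y) (lt_of_le_of_lt (mem_closedBall.1 hz) (by linarith))
    rw [dist_eq_norm] at this
    have := norm_le_norm_add_norm_sub' (fderiv ℝ u z) (fderiv ℝ u y)
    linarith
  have hε0 : 0 ≤ ε := dist_nonneg.trans hxy
  have := (convex_closedBall y ε).norm_image_sub_le_of_norm_fderiv_le (𝕜 := ℝ)
    (fun z _ => hd z) hb (mem_closedBall_self hε0) (mem_closedBall.2 (by rwa [dist_comm]) :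
      x ∈ closedBall y ε)
  have h2 : ‖x - y‖ ≤ ε := by rwa [← dist_eq_norm, dist_comm]
  have h3 : (‖fderiv ℝ u y‖ + η) * ‖x - y‖ ≤ (‖fderiv ℝ u y‖ + η) * ε := by gcongr
  have h4 := abs_sub_abs_le_abs_sub (u x) (u y)
  rw [Real.norm_eq_abs] at this
  linarith

lemma isCompact_superlevel (hu : Continuous u) (hc : HasCompactSupport u) {s : ℝ} (hs : 0 < s) :
    IsCompact {x | s ≤ |u x|} := by
  refine hc.isCompact.of_isClosed_subset (isClosed_le continuous_const hu.abs) fun x hx => ?_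
  refine subset_tsupport u ?_
  simp only [Set.mem_ofPred_eq] at hx
  intro h0
  rw [h0, abs_zero] at hx
  linarith

lemma fderiv_bound (hu : ContDiff ℝ (⊤ : ℕ∞) u) (hc : HasCompactSupport u) :
    ∃ Λ, 0 ≤ Λ ∧ ∀ x, ‖fderiv ℝ u x‖ ≤ Λ := by
  obtain ⟨Λ, h⟩ := (hu.continuous_fderiv (by simp)).bounded_above_of_compact_support (hc.fderiv ℝ)
  exact ⟨Λ, (norm_nonneg _).trans (h 0), h⟩

/-- The co-area step, before letting `η → 0` and `s' → s`: the `ε`-neighbourhood of `{|u| ≥ τ}` lies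
in `{|u| + ε(|∇u| + η) ≥ τ}`; its excess volume is integrated over the levels `τ ∈ [s, t]`. -/
lemma level_gradient_aux (hn : 2 ≤ n) (hu : ContDiff ℝ (⊤ : ℕ∞) u) (hc : HasCompactSupport u)
    {s' s t η : ℝ} (hs' : 0 < s') (hss : s' < s) (hst : s < t) (hη : 0 < η) :
    ENNReal.ofReal (isoConst n * (t - s) * volume.real {x | t ≤ |u x|} ^ (((n : ℝ) - 1) / n)) ≤
      ∫⁻ x in {x | s' ≤ |u x| ∧ |u x| < t}, ENNReal.ofReal (‖fderiv ℝ u x‖ + η) := by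
  have hcont : Continuous u := hu.continuous
  have hDc : Continuous (fun x => ‖fderiv ℝ u x‖) := (hu.continuous_fderiv (by simp)).norm
  obtain ⟨Λ, hΛ0, hΛ⟩ := fderiv_bound hu hc
  obtain ⟨ε0, hε0, hmod⟩ := exists_modulus hu hc hη
  set ε := min ε0 ((s - s') / (Λ + η)) with hε
  have hεp : 0 < ε := lt_min hε0 (div_pos (by linarith) (by linarith))
  have hεΛ : ε * (Λ + η) ≤ s - s' := by
    have : ε ≤ (s - s') / (Λ + η) := min_le_right _ _
    rwa [le_div_iff₀ (by linarith)] at this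
  have hmod' := hmod ε (min_le_left _ _)
  set S : Set (EuclideanSpace ℝ (Fin n)) := {x | s' ≤ |u x| ∧ |u x| < t} with hS
  have hSm : MeasurableSet S :=
    (measurableSet_le measurable_const hcont.abs.measurable).inter
      (measurableSet_lt hcont.abs.measurable measurable_const)
  set W : EuclideanSpace ℝ (Fin n) → ℝ := fun x => |u x| + ε * (‖fderiv ℝ u x‖ + η) with hW
  have hWc : Continuous W := by
    have := hcont.abs
    fun_prop
  set q := ((n : ℝ) - 1) / n with hq
  have hn1 : (1 : ℝ) < n := by exact_mod_cast (by omega : 1 < n)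
  have hqp : 0 ≤ q := by
    have : (0:ℝ) < n - 1 := by linarith
    positivity
  set f1 : EuclideanSpace ℝ (Fin n) → ℝ := fun x => max (min (W x) t - s) 0
  set f2 : EuclideanSpace ℝ (Fin n) → ℝ := fun x => max (min |u x| t - s) 0
  have hf1 : Measurable f1 := by
    have : Continuous f1 := by fun_prop
    exact this.measurable
  have hf2 : Measurable f2 := by
    have := hcont.abs
    have : Continuous f2 := by fun_prop
    exact this.measurable
  set K : ℝ := ε * isoConst n * volume.real {x | t ≤ |u x|} ^ q with hK
  have hcp := isoConst_pos hn
  have hK0 : 0 ≤ K := by positivity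
  -- lower bound from the isoperimetric inequality
  have low : (∫⁻ x, ENNReal.ofReal (f2 x)) + ENNReal.ofReal K * ENNReal.ofReal (t - s) ≤
      ∫⁻ x, ENNReal.ofReal (f1 x) := by
    rw [lintegral_eq_lintegral_meas_le _ (f := f1)
        (ae_of_all _ fun x => le_max_right _ _) hf1.aemeasurable,
      lintegral_eq_lintegral_meas_le _ (f := f2)
        (ae_of_all _ fun x => le_max_right _ _) hf2.aemeasurable]
    have e : ENNReal.ofReal K * ENNReal.ofReal (t - s) =
        ∫⁻ τ in Set.Ioi (0 : ℝ), (Set.Iic (t - s)).indicator (fun _ => ENNReal.ofReal K) τ := by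
      rw [setLIntegral_indicator measurableSet_Iic, setLIntegral_const, Set.inter_comm,
        Set.Ioi_inter_Iic]
      simp
    rw [e, ← lintegral_add_right _ (measurable_const.indicator measurableSet_Iic)]
    refine setLIntegral_mono' measurableSet_Ioi fun τ hτ => ?_
    have hτ0 : 0 < τ := hτ
    by_cases hτt : τ ≤ t - s
    · have e1 : {x | τ ≤ f1 x} = {x | s + τ ≤ W x} := by
        ext x
        simp only [f1, Set.mem_ofPred_eq, le_max_iff, le_sub_iff_add_le, le_min_iff]
        constructor
        · rintro (h | h) <;> linarith
        · intro h; left; constructor <;> linarith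
      have e2 : {x | τ ≤ f2 x} = {x | s + τ ≤ |u x|} := by
        ext x
        simp only [f2, Set.mem_ofPred_eq, le_max_iff, le_sub_iff_add_le, le_min_iff]
        constructor
        · rintro (h | h) <;> linarith
        · intro h; left; constructor <;> linarith
      rw [e1, e2, Set.indicator_of_mem (by exact hτt)]
      have hcomp := isCompact_superlevel hcont hc (s := s + τ) (by linarith)
      refine le_trans ?_ (volume_neighbourhood hn hcomp
        (measurableSet_le measurable_const hWc.measurable) hεp ?_)
      · have hmono : volume.real {x | t ≤ |u x|} ≤ volume.real {x | s + τ ≤ |u x|} := by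
          refine measureReal_mono (fun x hx => ?_) hcomp.measure_lt_top.ne
          simp only [Set.mem_ofPred_eq] at hx ⊢
          linarith
        have := Real.rpow_le_rpow measureReal_nonneg hmono hqp
        gcongr
        exact mul_le_mul_of_nonneg_left this (by positivity)
      · intro x hx y hxy
        exact le_trans hx (hmod' x y hxy)
    · rw [Set.indicator_of_notMem (by exact hτt), add_zero]
      have : {x | τ ≤ f2 x} = ∅ := by
        ext x
        simp only [f2, Set.mem_ofPred_eq, le_max_iff, le_sub_iff_add_le, le_min_iff,
          Set.mem_empty_iff_false, iff_false]
        rintro (h | h) <;> linarith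
      simp [this]
  -- upper bound from the pointwise estimate
  have up : ∫⁻ x, ENNReal.ofReal (f1 x) ≤ (∫⁻ x, ENNReal.ofReal (f2 x)) +
      ENNReal.ofReal ε * ∫⁻ x in S, ENNReal.ofReal (‖fderiv ℝ u x‖ + η) := by
    have hDm : Measurable fun x => ENNReal.ofReal (‖fderiv ℝ u x‖ + η) :=
      (hDc.measurable.add_const η).ennreal_ofReal
    rw [← lintegral_const_mul _ hDm, ← lintegral_indicator hSm,
      ← lintegral_add_left hf2.ennreal_ofReal]
    refine lintegral_mono fun x => ?_
    have hp : 0 ≤ ε * (‖fderiv ℝ u x‖ + η) := by positivity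
    by_cases hx : x ∈ S
    · rw [Set.indicator_of_mem hx, ← ENNReal.ofReal_mul hεp.le,
        ← ENNReal.ofReal_add (le_max_right _ _) hp]
      refine ENNReal.ofReal_le_ofReal ?_
      simp only [f1, W]
      refine max_le ?_ (by positivity)
      have h1 : min |u x| t - s ≤ max (min |u x| t - s) 0 := le_max_left _ _
      have h2 : min (|u x| + ε * (‖fderiv ℝ u x‖ + η)) t ≤
          min |u x| t + ε * (‖fderiv ℝ u x‖ + η) := by
        rw [← min_add_add_right]
        exact min_le_min_left _ (by linarith)
      linarith
    · rw [Set.indicator_of_notMem hx, add_zero]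
      refine ENNReal.ofReal_le_ofReal ?_
      simp only [f1, f2, W]
      have h5 : ε * (‖fderiv ℝ u x‖ + η) ≤ s - s' := le_trans (by gcongr; exact hΛ x) hεΛ
      by_cases h6 : s' ≤ |u x|
      · have h7 : t ≤ |u x| := by
          by_contra h8
          exact hx ⟨h6, not_le.1 h8⟩
        rw [min_eq_right h7]
        exact max_le_max_right _ (by linarith [min_le_right (|u x| + ε * (‖fderiv ℝ u x‖ + η)) t])
      · refine max_le (le_trans ?_ (le_max_right _ _)) (le_max_right _ _)
        linarith [min_le_left (|u x| + ε * (‖fderiv ℝ u x‖ + η)) t]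
  have fin : ∫⁻ x, ENNReal.ofReal (f2 x) ≠ ∞ := by
    have hi : Integrable u := hcont.integrable_of_hasCompactSupport hc
    refine ne_top_of_le_ne_top hi.abs.lintegral_lt_top.ne (lintegral_mono fun x => ?_)
    refine ENNReal.ofReal_le_ofReal (max_le ?_ (abs_nonneg _))
    linarith [min_le_left |u x| t]
  have := (ENNReal.add_le_add_iff_left fin).1 (low.trans up)
  rw [hK, ← ENNReal.ofReal_mul hK0, show ε * isoConst n * volume.real {x | t ≤ |u x|} ^ q * (t - s) =
    ε * (isoConst n * (t - s) * volume.real {x | t ≤ |u x|} ^ q) by ring,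
    ENNReal.ofReal_mul hεp.le] at this
  exact (ENNReal.mul_le_mul_iff_right (by simpa using hεp) (by simp)).1 this

/-- Co-area and isoperimetric inequality combined: the `L¹` norm of the gradient over the
layer `{s ≤ |u| < t}` is at least `(t - s)` times the perimeter of a ball of volume
`|{|u| ≥ t}|`. -/
lemma level_gradient (hn : 2 ≤ n) (hu : ContDiff ℝ (⊤ : ℕ∞) u) (hc : HasCompactSupport u)
    {s t : ℝ} (hs : 0 < s) (hst : s < t) :
    isoConst n * (t - s) * volume.real {x | t ≤ |u x|} ^ (((n : ℝ) - 1) / n) ≤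
      ∫ x in {x | s ≤ |u x| ∧ |u x| < t}, ‖fderiv ℝ u x‖ := by
  have hDc : Continuous (fun x => ‖fderiv ℝ u x‖) := (hu.continuous_fderiv (by simp)).norm
  have hDi : Integrable (fun x => ‖fderiv ℝ u x‖) :=
    hDc.integrable_of_hasCompactSupport (hc.fderiv ℝ).norm
  set S : Set (EuclideanSpace ℝ (Fin n)) := {x | s ≤ |u x| ∧ |u x| < t} with hS
  have hSfin : volume S ≠ ∞ := by
    refine ne_top_of_le_ne_top (isCompact_superlevel hu.continuous hc hs).measure_lt_top.ne
      (measure_mono fun x hx => hx.1)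
  set m := volume.real {x | t ≤ |u x|} ^ (((n : ℝ) - 1) / n)
  have h1 : ∀ s1 ∈ Set.Ioo s t, ∀ η > 0,
      isoConst n * (t - s1) * m ≤ (∫ x in S, ‖fderiv ℝ u x‖) + η * volume.real S := by
    intro s1 hs1 η hη
    have h := level_gradient_aux hn hu hc hs hs1.1 hs1.2 hη
    have hi : IntegrableOn (fun x => ‖fderiv ℝ u x‖ + η) S :=
      hDi.restrict.add (integrableOn_const hSfin)
    rw [← ofReal_integral_eq_lintegral_ofReal hi
      (ae_of_all _ fun x => by positivity)] at h
    have h2 := (ENNReal.ofReal_le_ofReal_iff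
      (integral_nonneg fun x => by positivity)).1 h
    rw [integral_add hDi.restrict (integrableOn_const hSfin)] at h2
    simpa [mul_comm η] using h2
  have h2 : ∀ s1 ∈ Set.Ioo s t, isoConst n * (t - s1) * m ≤ ∫ x in S, ‖fderiv ℝ u x‖ := by
    intro s1 hs1
    have hlim : Filter.Tendsto (fun η : ℝ => (∫ x in S, ‖fderiv ℝ u x‖) + η * volume.real S)
        (nhdsWithin 0 (Set.Ioi 0)) (nhds ((∫ x in S, ‖fderiv ℝ u x‖) + 0 * volume.real S)) := by
      refine Filter.Tendsto.mono_left ?_ nhdsWithin_le_nhds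
      exact Continuous.tendsto (by fun_prop) 0
    rw [zero_mul, add_zero] at hlim
    exact ge_of_tendsto hlim (Filter.eventually_of_mem self_mem_nhdsWithin fun η hη => h1 s1 hs1 η hη)
  have hlim : Filter.Tendsto (fun s1 : ℝ => isoConst n * (t - s1) * m)
      (nhdsWithin s (Set.Ioi s)) (nhds (isoConst n * (t - s) * m)) := by
    refine Filter.Tendsto.mono_left ?_ nhdsWithin_le_nhds
    exact Continuous.tendsto (by fun_prop) s
  exact le_of_tendsto hlim (Filter.eventually_of_mem (Ioo_mem_nhdsGT hst) h2)

end Level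

/-! ### From thin layers to capacity -/

/-- Passage from the estimate for thin layers to the capacity estimate: the thin-layer bound is
summed over a uniform partition of `[s, t]` with the discrete Hölder inequality, and the mesh is
sent to zero. Here `N` stands for the distribution function and `G` for the energy below a level. -/
lemma capacity_of_layers {n : ℕ} (hn : 2 ≤ n) {c s t : ℝ} (hst : s < t) {N G : ℝ → ℝ}
    (hN : AntitoneOn N (Set.Icc s t)) (hNt : 0 < N t) (hG : MonotoneOn G (Set.Icc s t))
    (hc : 0 < c)
    (H : ∀ a b, s ≤ a → a < b → b ≤ t → c * (b - a) * N b ^ (((n : ℝ) - 1) / n) ≤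
      (G b - G a) ^ (1 / (n : ℝ)) * (N a - N b) ^ (((n : ℝ) - 1) / n)) :
    c * (t - s) ≤ (G t - G s) ^ (1 / (n : ℝ)) * Real.log (N s / N t) ^ (((n : ℝ) - 1) / n) := by
  have hn0 : (0 : ℝ) < n := by exact_mod_cast (by omega : 0 < n)
  have hn1 : (0 : ℝ) < n - 1 := by
    have : (1 : ℝ) < n := by exact_mod_cast (by omega : 1 < n)
    linarith
  set q := ((n : ℝ) - 1) / n with hq
  have hqp : 0 < q := by positivity
  have hq1 : q ≤ 1 := by rw [hq, div_le_one hn0]; linarith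
  have hpos : ∀ a ∈ Set.Icc s t, 0 < N a := fun a ha =>
    hNt.trans_le (hN ha ⟨hst.le, le_rfl⟩ ha.2)
  -- on one layer `1 - l ≤ (N b / N a)^q` and `1 - N b / N a ≤ l`, with `l = log (N a / N b)`
  have step : ∀ a b, s ≤ a → a < b → b ≤ t → c * (b - a) * (1 - (Real.log (N a) - Real.log (N b))) ≤
      (G b - G a) ^ (1 / (n : ℝ)) * (Real.log (N a) - Real.log (N b)) ^ q := by
    intro a b ha hab hb
    have hNa := hpos a ⟨ha, hab.le.trans hb⟩
    have hNb := hpos b ⟨ha.trans hab.le, hb⟩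
    have hNab : N b ≤ N a := hN ⟨ha, hab.le.trans hb⟩ ⟨ha.trans hab.le, hb⟩ hab.le
    have hGab : G a ≤ G b := hG ⟨ha, hab.le.trans hb⟩ ⟨ha.trans hab.le, hb⟩ hab.le
    set l := Real.log (N a) - Real.log (N b) with hl
    have hl0 : 0 ≤ l := sub_nonneg.2 (Real.log_le_log hNb hNab)
    have hr : N b / N a = Real.exp (-l) := by
      rw [hl, neg_sub, Real.exp_sub, Real.exp_log hNa, Real.exp_log hNb]
    have h1 : 1 - l ≤ (N b / N a) ^ q := by
      rw [hr, ← Real.exp_mul]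
      have := Real.add_one_le_exp (-l * q)
      nlinarith
    have h2 : 1 - N b / N a ≤ l := by
      rw [hr]; linarith [Real.add_one_le_exp (-l)]
    have h3 : 0 ≤ 1 - N b / N a := by
      rw [sub_nonneg, div_le_one hNa]; exact hNab
    have hH := H a b ha hab hb
    calc c * (b - a) * (1 - l) ≤ c * (b - a) * (N b / N a) ^ q := by
          have : 0 ≤ c * (b - a) := mul_nonneg hc.le (by linarith)
          gcongr
      _ = (c * (b - a) * N b ^ q) / N a ^ q := by
          rw [Real.div_rpow hNb.le hNa.le]; ring
      _ ≤ ((G b - G a) ^ (1 / (n : ℝ)) * (N a - N b) ^ q) / N a ^ q := by gcongr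
      _ = (G b - G a) ^ (1 / (n : ℝ)) * (1 - N b / N a) ^ q := by
          rw [mul_div_assoc, ← Real.div_rpow (by linarith) hNa.le, sub_div, div_self hNa.ne']
      _ ≤ _ := by
          have : 0 ≤ G b - G a := by linarith
          gcongr
  set L := Real.log (N s / N t) with hL
  have hLs : L = Real.log (N s) - Real.log (N t) :=
    Real.log_div (hpos s ⟨le_rfl, hst.le⟩).ne' hNt.ne'
  have hconj : (n : ℝ).HolderConjugate ((n : ℝ) / (n - 1)) := by
    rw [Real.holderConjugate_iff]
    refine ⟨by linarith, ?_⟩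
    field_simp
    ring
  have part : ∀ m : ℕ, c * (t - s) * (1 - L / (m + 1)) ≤ (G t - G s) ^ (1 / (n : ℝ)) * L ^ q := by
    intro m
    set d : ℝ := (t - s) / (m + 1) with hd
    have hdp : 0 < d := div_pos (by linarith) (by positivity)
    set x : ℕ → ℝ := fun i => s + i * d with hx
    have hx0 : x 0 = s := by simp [hx]
    have hxm : x (m + 1) = t := by simp only [hx, hd]; push_cast; field_simp; ring
    have hxlt : ∀ i, x i < x (i + 1) := fun i => by simp only [hx]; push_cast; linarith
    have hxs : ∀ i, s ≤ x i := fun i => by simp only [hx]; nlinarith [(i.cast_nonneg : (0:ℝ) ≤ i)]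
    have hxt : ∀ i ∈ Finset.range (m + 1), x (i + 1) ≤ t := by
      intro i hi
      have : i + 1 ≤ m + 1 := by simpa using hi
      rw [← hxm]
      simp only [hx]
      gcongr
    have hmem : ∀ i ∈ Finset.range (m + 1), x i ∈ Set.Icc s t ∧ x (i + 1) ∈ Set.Icc s t :=
      fun i hi => ⟨⟨hxs i, (hxlt i).le.trans (hxt i hi)⟩, ⟨hxs _, hxt i hi⟩⟩
    have hsumG : ∑ i ∈ Finset.range (m + 1), (G (x (i + 1)) - G (x i)) = G t - G s := by
      rw [Finset.sum_range_sub (fun i => G (x i)), hxm, hx0]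
    have hsumL : ∑ i ∈ Finset.range (m + 1), (Real.log (N (x i)) - Real.log (N (x (i + 1)))) = L := by
      rw [Finset.sum_range_sub' (fun i => Real.log (N (x i))), hxm, hx0, hLs]
    have hG0 : ∀ i ∈ Finset.range (m + 1), 0 ≤ G (x (i + 1)) - G (x i) := fun i hi =>
      sub_nonneg.2 (hG (hmem i hi).1 (hmem i hi).2 (hxlt i).le)
    have hL0 : ∀ i ∈ Finset.range (m + 1), 0 ≤ Real.log (N (x i)) - Real.log (N (x (i + 1))) :=
      fun i hi => sub_nonneg.2 (Real.log_le_log (hpos _ (hmem i hi).2)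
        (hN (hmem i hi).1 (hmem i hi).2 (hxlt i).le))
    have hsum := Finset.sum_le_sum fun i (hi : i ∈ Finset.range (m + 1)) =>
      step (x i) (x (i + 1)) (hxs i) (hxlt i) (hxt i hi)
    have hdx : ∀ i, x (i + 1) - x i = d := fun i => by simp only [hx]; push_cast; ring
    simp only [hdx] at hsum
    rw [← Finset.mul_sum, Finset.sum_sub_distrib, hsumL] at hsum
    have hold := Real.inner_le_Lp_mul_Lq_of_nonneg (Finset.range (m + 1)) hconj
      (f := fun i => (G (x (i + 1)) - G (x i)) ^ (1 / (n : ℝ)))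
      (g := fun i => (Real.log (N (x i)) - Real.log (N (x (i + 1)))) ^ q)
      (fun i hi => Real.rpow_nonneg (hG0 i hi) _) (fun i hi => Real.rpow_nonneg (hL0 i hi) _)
    have e1 : ∑ i ∈ Finset.range (m + 1), ((G (x (i + 1)) - G (x i)) ^ (1 / (n : ℝ))) ^ (n : ℝ) =
        G t - G s := by
      rw [← hsumG]
      refine Finset.sum_congr rfl fun i hi => ?_
      rw [← Real.rpow_mul (hG0 i hi), one_div_mul_cancel hn0.ne', Real.rpow_one]
    have e2 : ∑ i ∈ Finset.range (m + 1), ((Real.log (N (x i)) - Real.log (N (x (i + 1)))) ^ q) ^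
        ((n : ℝ) / (n - 1)) = L := by
      rw [← hsumL]
      refine Finset.sum_congr rfl fun i hi => ?_
      rw [← Real.rpow_mul (hL0 i hi), show q * ((n : ℝ) / (n - 1)) = 1 by rw [hq]; field_simp,
        Real.rpow_one]
    rw [e1, e2, show 1 / ((n : ℝ) / (n - 1)) = q by rw [hq, one_div_div]] at hold
    refine le_trans (le_of_eq ?_) (hsum.trans hold)
    simp only [Finset.sum_const, Finset.card_range, nsmul_eq_mul, hd]
    push_cast
    field_simp
  have hlim : Filter.Tendsto (fun m : ℕ => c * (t - s) * (1 - L / ((m : ℝ) + 1))) Filter.atTop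
      (nhds (c * (t - s) * (1 - 0))) := by
    refine Filter.Tendsto.const_mul _ (Filter.Tendsto.const_sub _ ?_)
    exact (tendsto_const_div_atTop_nhds_zero_nat L).comp (Filter.tendsto_add_atTop_nat 1) |>.congr
      fun m => by simp
  rw [sub_zero, mul_one] at hlim
  exact le_of_tendsto' hlim part

/-! ### Distribution function, growth and deficit -/

/-- One-dimensional data recording a function on `ℝⁿ` level by level. `N` is the distribution function, `G` the
energy below a level, `M` the `p`-th power of the `L^p` norm; the last field is the capacity estimate
in the normalization that turns the exponential weight into `exp (a ^ (n / (n - 1)))`. -/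
structure LevelData (n : ℕ) (p : ℝ) (N G : ℝ → ℝ) (M : ℝ) : Prop where
  anti : ∀ a b, 0 < a → a ≤ b → N b ≤ N a
  mono : ∀ a b, 0 < a → a ≤ b → G a ≤ G b
  nonneg : ∀ a, 0 ≤ G a
  le_one : ∀ a, G a ≤ 1
  norm : ∀ a, 0 < a → a ^ p * N a ≤ M
  cap : ∀ s t, 0 < s → s < t → 0 < N t →
    t - s ≤ (G t - G s) ^ (1 / (n : ℝ)) * Real.log (N s / N t) ^ (((n : ℝ) - 1) / n)

/-- Optimal descending growth: the `L^p` norm controls the height `a` reached on a set of measure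
`N a` when the energy below level `a` is at most `θ`. It suffices to compare `a` with the single
lower level `κ a^{-1/(n-1)}`, `κ = T^{n/(n-1)}/2`. -/
lemma LevelData.growth {n : ℕ} (hn : 2 ≤ n) {p : ℝ} {N G : ℝ → ℝ} {M : ℝ}
    (h : LevelData n p N G M) {T a θ : ℝ} (hT : 0 < T) (ha : T ≤ a) (hNa : 0 < N a)
    (hθ : 1 / 2 ≤ θ) (hGθ : G a ≤ θ) :
    (T ^ ((n : ℝ) / (n - 1)) / 2) ^ p *
      Real.exp (-(2 * ((n : ℝ) / (n - 1)) * (T ^ ((n : ℝ) / (n - 1)) / 2))) *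
      (N a / a ^ (p / ((n : ℝ) - 1)) *
        Real.exp (θ ^ (-(1 / ((n : ℝ) - 1))) * a ^ ((n : ℝ) / (n - 1)))) ≤ M := by
  have hn0 : (0 : ℝ) < n := by exact_mod_cast (by omega : 0 < n)
  have hn1 : (1 : ℝ) ≤ n - 1 := by
    have : (2 : ℝ) ≤ n := by exact_mod_cast hn
    linarith
  have hn1' : (0 : ℝ) < n - 1 := by linarith
  set k := 1 / ((n : ℝ) - 1) with hk
  have hk0 : 0 < k := by positivity
  have hk1 : k ≤ 1 := by rw [hk, div_le_one hn1']; exact hn1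
  set r := (n : ℝ) / (n - 1) with hr
  have hrk : r = 1 + k := by rw [hr, hk]; field_simp; ring
  set κ := T ^ r / 2 with hκ
  have hap : 0 < a := hT.trans_le ha
  have hκp : 0 < κ := by positivity
  have hTr : T ^ r ≤ a ^ r := Real.rpow_le_rpow hT.le ha (by linarith)
  have har : a ^ r = a * a ^ k := by rw [hrk, Real.rpow_add hap, Real.rpow_one]
  have hakp : 0 < a ^ k := by positivity
  set s := κ / a ^ k with hs
  have hsp : 0 < s := by positivity
  have hsa : s ≤ a / 2 := by
    rw [hs, div_le_iff₀ hakp, hκ]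
    have : a / 2 * a ^ k = a ^ r / 2 := by rw [har]; ring
    linarith
  have hslt : s < a := by linarith
  have hNs : 0 < N s := hNa.trans_le (h.anti s a hsp hslt.le)
  set L := Real.log (N s / N a) with hL
  have hL0 : 0 ≤ L := Real.log_nonneg (by rw [le_div_iff₀ hNa]; simpa using h.anti s a hsp hslt.le)
  have hθp : 0 < θ := by linarith
  have h1 : a - s ≤ θ ^ (1 / (n : ℝ)) * L ^ (((n : ℝ) - 1) / n) := by
    refine (h.cap s a hsp hslt hNa).trans ?_
    have : 0 ≤ G a - G s := sub_nonneg.2 (h.mono s a hsp hslt.le)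
    have h2 : G a - G s ≤ θ := by linarith [h.nonneg s]
    gcongr
  have h2 : (a - s) ^ r ≤ θ ^ k * L := by
    calc (a - s) ^ r ≤ (θ ^ (1 / (n : ℝ)) * L ^ (((n : ℝ) - 1) / n)) ^ r :=
          Real.rpow_le_rpow (by linarith) h1 (by linarith)
      _ = θ ^ k * L := by
          rw [Real.mul_rpow (by positivity) (by positivity), ← Real.rpow_mul hθp.le,
            ← Real.rpow_mul hL0, show 1 / (n : ℝ) * r = k by rw [hr, hk]; field_simp,
            show ((n : ℝ) - 1) / n * r = 1 by rw [hr]; field_simp, Real.rpow_one]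
  have h3 : a ^ r - r * κ ≤ (a - s) ^ r := by
    have hb := one_add_mul_self_le_rpow_one_add (s := -(s / a)) (p := r)
      (by have : s / a ≤ 1 := by rw [div_le_one hap]; exact hslt.le
          linarith) (by linarith)
    have e : (a - s) = a * (1 + -(s / a)) := by field_simp; ring
    rw [e, Real.mul_rpow hap.le (by
      have : s / a ≤ 1 := by rw [div_le_one hap]; exact hslt.le
      linarith)]
    calc a ^ r - r * κ = a ^ r * (1 + r * -(s / a)) := by
          have : a ^ r * (s / a) = κ := by rw [har, hs]; field_simp
          linear_combination r * this
      _ ≤ _ := by gcongr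
  have hθk : θ ^ (-k) ≤ 2 := by
    calc θ ^ (-k) ≤ (1 / 2 : ℝ) ^ (-k) :=
          Real.rpow_le_rpow_of_nonpos (by norm_num) hθ (by linarith)
      _ = 2 ^ k := by rw [Real.rpow_neg (by norm_num), ← Real.inv_rpow (by norm_num)]; norm_num
      _ ≤ 2 ^ (1 : ℝ) := Real.rpow_le_rpow_of_exponent_le (by norm_num) hk1
      _ = 2 := by simp
  have h4 : θ ^ (-k) * a ^ r - 2 * r * κ ≤ L := by
    have h5 : θ ^ (-k) * (a ^ r - r * κ) ≤ L := by
      calc _ ≤ θ ^ (-k) * (θ ^ k * L) := by gcongr; exact h3.trans h2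
        _ = L := by rw [← mul_assoc, ← Real.rpow_add hθp]; simp
    have : 0 ≤ r * κ := by have : 0 < r := by linarith
                           positivity
    nlinarith
  have h6 : N s = N a * Real.exp L := by
    rw [hL, Real.exp_log (by positivity)]; field_simp
  have h7 : s ^ p = κ ^ p / a ^ (p / ((n : ℝ) - 1)) := by
    rw [hs, Real.div_rpow hκp.le hakp.le, ← Real.rpow_mul hap.le]
    congr 2
    rw [hk]; field_simp
  calc _ = s ^ p * (N a * Real.exp (θ ^ (-k) * a ^ r - 2 * r * κ)) := by
        rw [h7, show θ ^ (-k) * a ^ r - 2 * r * κ = -(2 * r * κ) + θ ^ (-k) * a ^ r by ring,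
          Real.exp_add]
        ring
    _ ≤ s ^ p * N s := by rw [h6]; gcongr
    _ ≤ M := h.norm s hsp

/-- The deficit `F` with `exp (a^{n/(n-1)}) / a^{p/(n-1)} * N a = M * exp (-F a)`. -/
def deficit (n : ℕ) (p : ℝ) (N : ℝ → ℝ) (M a : ℝ) : ℝ :=
  Real.log M - Real.log (N a) - a ^ ((n : ℝ) / (n - 1)) + p / ((n : ℝ) - 1) * Real.log a

/-- A constant `C₀ ≥ 0` for which the deficit satisfies `F a ≥ -C₀` at every height `a ≥ T` with
`N a > 0`. -/
def growthConst (n : ℕ) (p T : ℝ) : ℝ :=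
  max 0 (-Real.log ((T ^ ((n : ℝ) / (n - 1)) / 2) ^ p *
      Real.exp (-(2 * ((n : ℝ) / (n - 1)) * (T ^ ((n : ℝ) / (n - 1)) / 2)))))

lemma LevelData.pos {n : ℕ} {p : ℝ} {N G : ℝ → ℝ} {M : ℝ}
    (h : LevelData n p N G M) {a : ℝ} (ha : 0 < a) (hNa : 0 < N a) : 0 < M :=
  (show 0 < a ^ p * N a by positivity).trans_le (h.norm a ha)

/-- The growth estimate in logarithmic form: energy at most `θ < 1` below level `a` forces a deficit
proportional to `a^{n/(n-1)}`. -/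
lemma LevelData.le_deficit {n : ℕ} (hn : 2 ≤ n) {p : ℝ} {N G : ℝ → ℝ} {M : ℝ}
    (h : LevelData n p N G M) {T a θ : ℝ} (hT : 0 < T) (ha : T ≤ a) (hNa : 0 < N a)
    (hθ : 1 / 2 ≤ θ) (hGθ : G a ≤ θ) :
    (θ ^ (-(1 / ((n : ℝ) - 1))) - 1) * a ^ ((n : ℝ) / (n - 1)) - growthConst n p T ≤
      deficit n p N M a := by
  have h1 := h.growth hn hT ha hNa hθ hGθ
  set c := (T ^ ((n : ℝ) / (n - 1)) / 2) ^ p *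
      Real.exp (-(2 * ((n : ℝ) / (n - 1)) * (T ^ ((n : ℝ) / (n - 1)) / 2))) with hc
  have hcp : 0 < c := by positivity
  have h3 : -Real.log c ≤ growthConst n p T := le_max_right _ _
  clear_value c
  have hap : 0 < a := hT.trans_le ha
  have h2 := Real.log_le_log (by positivity) h1
  rw [Real.log_mul hcp.ne' (by positivity), Real.log_mul (by positivity) (by positivity),
    Real.log_div hNa.ne' (by positivity), Real.log_rpow hap, Real.log_exp] at h2
  unfold deficit
  linarith

/-- Two small heights with deficit at most `X` have comparable distribution values. -/
lemma LevelData.close_small {n : ℕ} (hn : 2 ≤ n) {p : ℝ} (hp : 1 ≤ p) {N G : ℝ → ℝ} {M : ℝ}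
    (h : LevelData n p N G M) {T a b A X : ℝ} (hT : 0 < T) (ha : T ≤ a) (hab : a < b)
    (hNb : 0 < N b) (hX : 1 ≤ X) (hFb : deficit n p N M b ≤ X)
    (hb : b ^ ((n : ℝ) / (n - 1)) ≤ A * X) :
    Real.log (N a / N b) ≤ (1 + A + |(p + p / ((n : ℝ) - 1)) * Real.log T|) * X := by
  have hn1 : (0 : ℝ) < n - 1 := by
    have : (2 : ℝ) ≤ n := by exact_mod_cast hn
    linarith
  have hap : 0 < a := hT.trans_le ha
  have hNa : 0 < N a := hNb.trans_le (h.anti a b hap hab.le)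
  rw [Real.log_div hNa.ne' hNb.ne']
  have h1 : p * Real.log T + Real.log (N a) ≤ Real.log M := by
    rw [← Real.log_rpow hT, ← Real.log_mul (by positivity) hNa.ne']
    refine Real.log_le_log (by positivity) (le_trans ?_ (h.norm T hT))
    gcongr
    exact h.anti T a hT ha
  have h2 : Real.log T ≤ Real.log b := Real.log_le_log hT (by linarith)
  have h3 : p / ((n : ℝ) - 1) * Real.log T ≤ p / ((n : ℝ) - 1) * Real.log b := by gcongr
  unfold deficit at hFb
  have h4 := neg_abs_le ((p + p / ((n : ℝ) - 1)) * Real.log T)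
  have h5 := abs_nonneg ((p + p / ((n : ℝ) - 1)) * Real.log T)
  nlinarith

set_option maxHeartbeats 1000000 in
/-- Two large heights with deficit at most `X - C₀` have comparable distribution values: the energy
`δ` between them satisfies `δ a^{n/(n-1)} ≲ X`, since otherwise the growth estimate with `θ = 1 - δ`
would give a larger deficit at `a`. -/
lemma LevelData.close_large {n : ℕ} (hn : 2 ≤ n) {p : ℝ} (hp : 1 ≤ p) {N G : ℝ → ℝ} {M : ℝ}
    (h : LevelData n p N G M) {T a b X : ℝ} (hT : 0 < T) (ha : T ≤ a) (hab : a < b)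
    (hNb : 0 < N b) (hX : 1 ≤ X) (hFa : deficit n p N M a + growthConst n p T ≤ X)
    (hFb : deficit n p N M b + growthConst n p T ≤ X)
    (hL : 2 ^ (n + 1) * n * X ≤ a ^ ((n : ℝ) / (n - 1))) :
    Real.log (N a / N b) ≤ (2 * (1 + 2 ^ n * n)) * X := by
  have hn0 : (0 : ℝ) < n := by exact_mod_cast (by omega : 0 < n)
  have hn1 : (1 : ℝ) ≤ n - 1 := by
    have : (2 : ℝ) ≤ n := by exact_mod_cast hn
    linarith
  have hn1' : (0 : ℝ) < n - 1 := by linarith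
  have hap : 0 < a := hT.trans_le ha
  have hbp : 0 < b := hap.trans hab
  have hNa : 0 < N a := hNb.trans_le (h.anti a b hap hab.le)
  set L := Real.log (N a / N b) with hLdef
  have hL0 : 0 ≤ L := Real.log_nonneg (by rw [le_div_iff₀ hNb]; simpa using h.anti a b hap hab.le)
  set k := 1 / ((n : ℝ) - 1) with hk
  have hk0 : 0 < k := by positivity
  have hk1 : k ≤ 1 := by rw [hk, div_le_one hn1']; exact hn1
  set r := (n : ℝ) / (n - 1) with hr
  have hrk : r = 1 + k := by rw [hr, hk]; field_simp; ring
  set δ := G b - G a with hδ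
  have hδ0 : 0 ≤ δ := sub_nonneg.2 (h.mono a b hap hab.le)
  have hcap : b - a ≤ δ ^ (1 / (n : ℝ)) * L ^ (((n : ℝ) - 1) / n) := h.cap a b hap hab hNb
  have hδp : 0 < δ := by
    refine lt_of_le_of_ne hδ0 fun h0 => ?_
    rw [← h0, Real.zero_rpow (by positivity), zero_mul] at hcap
    linarith
  set δ' := min δ (1 / 2) with hδ'
  have hδ'0 : 0 < δ' := lt_min hδp (by norm_num)
  have hδ'h : δ' ≤ 1 / 2 := min_le_right _ _
  have harp : 0 < a ^ r := by positivity
  have h1 := h.le_deficit hn hT ha hNa (θ := 1 - δ') (by linarith)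
    (by have : δ' ≤ δ := min_le_left _ _
        linarith [h.le_one b])
  -- Bernoulli: `(1 - δ')^{-k} ≥ 1 + k δ'`
  have h2 : k * δ' ≤ (1 - δ') ^ (-k) - 1 := by
    have hlog : Real.log (1 - δ') ≤ -δ' := by
      have := Real.log_le_sub_one_of_pos (show 0 < 1 - δ' by linarith)
      linarith
    rw [Real.rpow_def_of_pos (by linarith)]
    have := Real.add_one_le_exp (Real.log (1 - δ') * -k)
    nlinarith
  have h3 : δ' * a ^ r ≤ (n - 1) * X := by
    have h4 : k * δ' * a ^ r ≤ X := by
      have : k * δ' * a ^ r ≤ ((1 - δ') ^ (-k) - 1) * a ^ r := by gcongr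
      linarith
    have : δ' * a ^ r = (n - 1) * (k * δ' * a ^ r) := by rw [hk]; field_simp
    rw [this]; gcongr
  have h2n : (0 : ℝ) < 2 ^ n := by positivity
  have h5 : δ' * (2 ^ (n + 1)) < 1 := by
    by_contra hcon
    push Not at hcon
    have h6 : δ' * (2 ^ (n + 1) * n * X) ≤ (n - 1) * X := le_trans (by gcongr) h3
    have h7 : n * X ≤ δ' * (2 ^ (n + 1) * n * X) := by
      have : 0 ≤ n * X := by positivity
      nlinarith
    nlinarith
  rw [pow_succ] at h5
  have h4le : (4 : ℝ) ≤ 2 ^ n := by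
    calc (4 : ℝ) = 2 ^ 2 := by norm_num
      _ ≤ 2 ^ n := pow_le_pow_right₀ (by norm_num) hn
  have hδδ : δ' = δ := by
    rcases min_choice δ (1 / 2) with h | h
    · exact h
    · rw [← hδ'] at h
      rw [h] at h5
      nlinarith
  rw [hδδ] at h3 h5
  -- convexity splits `(a + (b - a))^r` with weights `1 - d`, `d = 2^{n-1} δ`
  set d := 2 ^ n / 2 * δ with hd
  have hdp : 0 < d := by positivity
  have hd2 : d ≤ 1 / 2 := by
    have : d = δ * (2 ^ n * 2) / 4 := by rw [hd]; ring
    linarith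
  have hba : (b - a) ^ r ≤ δ ^ k * L := by
    calc (b - a) ^ r ≤ (δ ^ (1 / (n : ℝ)) * L ^ (((n : ℝ) - 1) / n)) ^ r :=
          Real.rpow_le_rpow (by linarith) hcap (by linarith)
      _ = δ ^ k * L := by
          rw [Real.mul_rpow (by positivity) (by positivity), ← Real.rpow_mul hδp.le,
            ← Real.rpow_mul hL0, show 1 / (n : ℝ) * r = k by rw [hr, hk]; field_simp,
            show ((n : ℝ) - 1) / n * r = 1 by rw [hr]; field_simp, Real.rpow_one]
  have hconv : b ^ r ≤ (1 - d) ^ (-k) * a ^ r + d ^ (-k) * (b - a) ^ r := by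
    have hcx := (convexOn_rpow (p := r) (by linarith)).2
      (show a / (1 - d) ∈ Set.Ici 0 from div_nonneg hap.le (by linarith))
      (show (b - a) / d ∈ Set.Ici 0 from div_nonneg (by linarith) hdp.le)
      (show 0 ≤ 1 - d by linarith) hdp.le (by ring)
    have h1d : 0 < 1 - d := by linarith
    have e : (1 - d) • (a / (1 - d)) + d • ((b - a) / d) = b := by
      simp only [smul_eq_mul]; field_simp; ring
    rw [e] at hcx
    simp only [smul_eq_mul] at hcx
    rw [Real.div_rpow hap.le h1d.le, Real.div_rpow (by linarith) hdp.le] at hcx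
    have e1 : ∀ z : ℝ, 0 < z → z ^ (-k) = z / z ^ r := by
      intro z hz
      rw [show -k = 1 - r by rw [hrk]; ring, Real.rpow_sub hz, Real.rpow_one]
    rw [e1 _ h1d, e1 _ hdp]
    refine hcx.trans (le_of_eq ?_)
    ring
  have hA1 : (1 - d) ^ (-k) ≤ 1 + 2 * d := by
    have h1d : 0 < 1 - d := by linarith
    calc (1 - d) ^ (-k) ≤ (1 - d) ^ (-1 : ℝ) :=
          Real.rpow_le_rpow_of_exponent_ge h1d (by linarith) (by linarith)
      _ = 1 / (1 - d) := by rw [Real.rpow_neg_one, one_div]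
      _ ≤ 1 + 2 * d := by
          rw [div_le_iff₀ h1d]
          linarith [mul_nonneg hdp.le (show 0 ≤ 1 - 2 * d by linarith)]
  have hA2 : d ^ (-k) * (b - a) ^ r ≤ L / 2 := by
    have e2 : ((2 : ℝ) ^ n / 2) ^ k = 2 := by
      have : (2 : ℝ) ^ n / 2 = 2 ^ ((n : ℝ) - 1) := by
        rw [Real.rpow_sub (by norm_num), Real.rpow_natCast, Real.rpow_one]
      rw [this, ← Real.rpow_mul (by norm_num), hk, mul_one_div_cancel hn1'.ne', Real.rpow_one]
    calc d ^ (-k) * (b - a) ^ r ≤ d ^ (-k) * (δ ^ k * L) := by gcongr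
      _ = L / 2 := by
          rw [hd, Real.rpow_neg (by positivity), Real.mul_rpow (by positivity) hδp.le, e2]
          have : 0 < δ ^ k := by positivity
          field_simp
  have hlogab : Real.log a ≤ Real.log b := Real.log_le_log hap hab.le
  have hpk : p / ((n : ℝ) - 1) * Real.log a ≤ p / ((n : ℝ) - 1) * Real.log b := by gcongr
  have hFa2 := h.le_deficit hn hT ha hNa (θ := 1) (by norm_num) (h.le_one a)
  rw [Real.one_rpow, sub_self, zero_mul, zero_sub] at hFa2
  have hLs : L = Real.log (N a) - Real.log (N b) := Real.log_div hNa.ne' hNb.ne'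
  unfold deficit at hFa2 hFb
  rw [← hr] at hFa2 hFb
  have h8 : 2 * d * a ^ r ≤ 2 ^ n * n * X := by
    have : 2 * d * a ^ r = 2 ^ n * (δ * a ^ r) := by rw [hd]; ring
    rw [this, mul_assoc (2 ^ n : ℝ)]
    have h10 : ((n : ℝ) - 1) * X = n * X - X := by ring
    exact mul_le_mul_of_nonneg_left (by linarith) h2n.le
  have h9 : (1 - d) ^ (-k) * a ^ r ≤ (1 + 2 * d) * a ^ r := by gcongr
  have e9 : (1 + 2 * d) * a ^ r = a ^ r + 2 * d * a ^ r := by ring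
  have e10 : (2 * (1 + 2 ^ n * n)) * X = 2 * X + 2 * (2 ^ n * n * X) := by ring
  rw [e10]
  rw [e9] at h9
  linarith

/-! ### Summation over deficit levels -/

/-- If `m` is a rank function, that is `μ {m ≤ c} ≤ c`, and `log m` oscillates by at most `L` on `Y`,
then `1 / m` has integral `O(1 + L)` over `Y`: each of the `O(1 + L)` slices
`{k ≤ log m < k + 1}` contributes at most `e`. -/
lemma lintegral_inv_rank_le {α : Type*} [MeasurableSpace α] (μ : Measure α) [SFinite μ]
    {S Y : Set α} (hS : MeasurableSet S) {m : α → ℝ} (hm : Measurable m)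
    (hrank : ∀ c, 0 ≤ c → μ {x | x ∈ S ∧ m x ≤ c} ≤ ENNReal.ofReal c)
    (hYS : Y ⊆ S) (hpos : ∀ x ∈ Y, 0 < m x) {L : ℝ} (hL : 0 ≤ L)
    (hosc : ∀ x ∈ Y, ∀ y ∈ Y, Real.log (m x) - Real.log (m y) ≤ L) :
    ∫⁻ x in Y, ENNReal.ofReal (1 / m x) ∂μ ≤ ENNReal.ofReal (Real.exp 1 * (2 * L + 2)) := by
  rcases Y.eq_empty_or_nonempty with rfl | ⟨x₀, hx₀⟩
  · simp
  set l := Real.log (m x₀) with hl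
  let Z : ℤ → Set α := fun k => {x | x ∈ S ∧ (0 < m x ∧ ⌊Real.log (m x)⌋ = k)}
  have hZm : ∀ k, MeasurableSet (Z k) := fun k =>
    hS.inter ((measurableSet_lt measurable_const hm).inter
      ((Int.measurable_floor.comp (Real.measurable_log.comp hm)) (measurableSet_singleton k)))
  set ν := μ.withDensity (fun x => ENNReal.ofReal (1 / m x)) with hν
  have hZ : ∀ k, ν (Z k) ≤ ENNReal.ofReal (Real.exp 1) := by
    intro k
    rw [hν, withDensity_apply _ (hZm k)]
    have hb : ∀ x ∈ Z k, ENNReal.ofReal (1 / m x) ≤ ENNReal.ofReal (Real.exp (-k)) := by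
      rintro x ⟨-, hx0, hxk⟩
      apply ENNReal.ofReal_le_ofReal
      rw [Real.exp_neg, one_div]
      gcongr
      rw [← Real.le_log_iff_exp_le hx0, ← hxk]
      exact Int.floor_le _
    calc ∫⁻ x in Z k, ENNReal.ofReal (1 / m x) ∂μ
        ≤ ∫⁻ x in Z k, ENNReal.ofReal (Real.exp (-k)) ∂μ := setLIntegral_mono' (hZm k) hb
      _ = ENNReal.ofReal (Real.exp (-k)) * μ (Z k) := by simp
      _ ≤ ENNReal.ofReal (Real.exp (-k)) * ENNReal.ofReal (Real.exp (k + 1)) := by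
          gcongr
          refine (measure_mono ?_).trans (hrank _ (Real.exp_pos _).le)
          rintro x ⟨hxS, hx0, hxk⟩
          refine ⟨hxS, ?_⟩
          rw [← Real.log_le_iff_le_exp hx0, ← hxk]
          exact (Int.lt_floor_add_one _).le
      _ = ENNReal.ofReal (Real.exp 1) := by
          rw [← ENNReal.ofReal_mul (Real.exp_pos _).le, ← Real.exp_add]
          congr 2; ring
  have hcov : Y ⊆ ⋃ k ∈ Finset.Icc ⌊l - L⌋ ⌊l + L⌋, Z k := by
    intro x hx
    simp only [Set.mem_iUnion, Finset.mem_Icc]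
    refine ⟨⌊Real.log (m x)⌋, ⟨Int.floor_le_floor ?_, Int.floor_le_floor ?_⟩, hYS hx, hpos x hx, rfl⟩
    · linarith [hosc x₀ hx₀ x hx]
    · linarith [hosc x hx x₀ hx₀]
  calc ∫⁻ x in Y, ENNReal.ofReal (1 / m x) ∂μ = ν Y := by rw [hν, withDensity_apply']
    _ ≤ ν (⋃ k ∈ Finset.Icc ⌊l - L⌋ ⌊l + L⌋, Z k) := measure_mono hcov
    _ ≤ ∑ k ∈ Finset.Icc ⌊l - L⌋ ⌊l + L⌋, ν (Z k) := measure_biUnion_finset_le _ _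
    _ ≤ ∑ k ∈ Finset.Icc ⌊l - L⌋ ⌊l + L⌋, ENNReal.ofReal (Real.exp 1) :=
        Finset.sum_le_sum fun k _ => hZ k
    _ = ENNReal.ofReal (Real.exp 1 * ((Finset.Icc ⌊l - L⌋ ⌊l + L⌋).card : ℝ)) := by
        rw [Finset.sum_const, nsmul_eq_mul, ENNReal.ofReal_mul (Real.exp_pos _).le,
          ENNReal.ofReal_natCast, mul_comm]
    _ ≤ _ := by
        gcongr
        rw [Int.card_Icc]
        have h1 : ⌊l - L⌋ ≤ ⌊l + L⌋ := Int.floor_le_floor (by linarith)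
        have h2 : (((⌊l + L⌋ + 1 - ⌊l - L⌋).toNat : ℤ) : ℝ) = ⌊l + L⌋ + 1 - ⌊l - L⌋ := by
          rw [Int.toNat_of_nonneg (by linarith)]; push_cast; ring
        rw [Int.cast_natCast] at h2
        rw [h2]
        linarith [Int.floor_le (l + L), Int.lt_floor_add_one (l - L)]

/-- The constant obtained by summing the contributions of the deficit levels `j ≤ F + C₀ < j + 1`. -/
def garsiaConst (C₀ D : ℝ) : ℝ :=
  ∑' j : ℕ, Real.exp (C₀ - j) * (2 * (Real.exp 1 * (2 * (D * (j + 1)) + 2)))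

lemma summable_garsia (C₀ D : ℝ) : Summable fun j : ℕ =>
    Real.exp (C₀ - j) * (2 * (Real.exp 1 * (2 * (D * (j + 1)) + 2))) := by
  have h0 := Real.summable_pow_mul_exp_neg_nat_mul 0 (r := 1) one_pos
  have h1 := Real.summable_pow_mul_exp_neg_nat_mul 1 (r := 1) one_pos
  refine ((h0.mul_left (Real.exp C₀ * (2 * (Real.exp 1 * (2 * D + 2))))).add
    (h1.mul_left (Real.exp C₀ * (2 * (Real.exp 1 * (2 * D)))))).congr fun j => ?_
  rw [sub_eq_add_neg, Real.exp_add]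
  simp only [neg_mul, one_mul, pow_zero, pow_one]
  ring

lemma garsiaConst_nonneg (C₀ : ℝ) {D : ℝ} (hD : 0 ≤ D) : 0 ≤ garsiaConst C₀ D :=
  tsum_nonneg fun j => by positivity

/-- A Garsia-type argument. On each deficit level, split further by whether `h ≤ A X`, the oscillation
of `log m` is linear in the deficit, whereas the integrand gains the exponential of the deficit. -/
lemma lintegral_deficit_le {α : Type*} [MeasurableSpace α] (μ : Measure α) [SFinite μ]
    {S : Set α} (hS : MeasurableSet S) {m F h : α → ℝ} (hm : Measurable m)
    (hFm : Measurable F) (hhm : Measurable h)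
    (hrank : ∀ c, 0 ≤ c → μ {x | x ∈ S ∧ m x ≤ c} ≤ ENNReal.ofReal c)
    (hm0 : ∀ x, 0 ≤ m x)
    {C₀ D A : ℝ} (hD : 0 ≤ D) (hF : ∀ x ∈ S, 0 < m x → -C₀ ≤ F x)
    (hosc : ∀ X, 1 ≤ X → ∀ x ∈ S, ∀ y ∈ S, 0 < m x → 0 < m y → F x + C₀ ≤ X → F y + C₀ ≤ X →
      (h x ≤ A * X ∧ h y ≤ A * X ∨ A * X < h x ∧ A * X < h y) →
      Real.log (m x) - Real.log (m y) ≤ D * X) :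
    ∫⁻ x in S, ENNReal.ofReal (Real.exp (-F x) / m x) ∂μ ≤ ENNReal.ofReal (garsiaConst C₀ D) := by
  set ν := μ.withDensity (fun x => ENNReal.ofReal (Real.exp (-F x) / m x)) with hν
  let P : ℕ → Set α := fun j => {x | x ∈ S ∧ 0 < m x ∧ ((j : ℝ) ≤ F x + C₀ ∧ F x + C₀ < j + 1) ∧
    h x ≤ A * (j + 1)}
  let Q : ℕ → Set α := fun j => {x | x ∈ S ∧ 0 < m x ∧ ((j : ℝ) ≤ F x + C₀ ∧ F x + C₀ < j + 1) ∧
    A * (j + 1) < h x}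
  have hFC : Measurable fun x => F x + C₀ := hFm.add_const _
  have hPm : ∀ j, MeasurableSet (P j) := fun j =>
    hS.inter ((measurableSet_lt measurable_const hm).inter
      (((measurableSet_le measurable_const hFC).inter (measurableSet_lt hFC measurable_const)).inter
        (measurableSet_le hhm measurable_const)))
  have hQm : ∀ j, MeasurableSet (Q j) := fun j =>
    hS.inter ((measurableSet_lt measurable_const hm).inter
      (((measurableSet_le measurable_const hFC).inter (measurableSet_lt hFC measurable_const)).inter
        (measurableSet_lt measurable_const hhm)))
  have piece : ∀ (j : ℕ) (Y : Set α), MeasurableSet Y → (∀ x ∈ Y, x ∈ S ∧ 0 < m x ∧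
      ((j : ℝ) ≤ F x + C₀ ∧ F x + C₀ < j + 1)) →
      ((∀ x ∈ Y, h x ≤ A * (j + 1)) ∨ ∀ x ∈ Y, A * (j + 1) < h x) →
      ν Y ≤ ENNReal.ofReal (Real.exp (C₀ - j) * (Real.exp 1 * (2 * (D * (j + 1)) + 2))) := by
    intro j Y hYm hY hYh
    rw [hν, withDensity_apply _ hYm, ENNReal.ofReal_mul (Real.exp_pos _).le]
    calc ∫⁻ x in Y, ENNReal.ofReal (Real.exp (-F x) / m x) ∂μ
        ≤ ∫⁻ x in Y, ENNReal.ofReal (Real.exp (C₀ - j)) * ENNReal.ofReal (1 / m x) ∂μ := by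
          refine setLIntegral_mono' hYm fun x hx => ?_
          rw [← ENNReal.ofReal_mul (Real.exp_pos _).le, div_eq_mul_one_div]
          have := (hY x hx).2.1
          gcongr
          linarith [(hY x hx).2.2.1]
      _ = ENNReal.ofReal (Real.exp (C₀ - j)) * ∫⁻ x in Y, ENNReal.ofReal (1 / m x) ∂μ :=
          lintegral_const_mul' _ _ ENNReal.ofReal_ne_top
      _ ≤ _ := by
          gcongr
          refine lintegral_inv_rank_le μ hS hm hrank (fun x hx => (hY x hx).1)
            (fun x hx => (hY x hx).2.1) (by positivity) fun x hx y hy => ?_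
          refine hosc _ (by linarith [(j.cast_nonneg : (0 : ℝ) ≤ j)]) x (hY x hx).1 y (hY y hy).1
            (hY x hx).2.1 (hY y hy).2.1 (hY x hx).2.2.2.le (hY y hy).2.2.2.le ?_
          rcases hYh with hh | hh
          · exact Or.inl ⟨hh x hx, hh y hy⟩
          · exact Or.inr ⟨hh x hx, hh y hy⟩
  have hnull : ν {x | x ∈ S ∧ m x ≤ 0} = 0 := by
    refine withDensity_absolutelyContinuous μ _ ?_
    simpa using hrank 0 le_rfl
  have hcov : S ⊆ {x | x ∈ S ∧ m x ≤ 0} ∪ ⋃ j, (P j ∪ Q j) := by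
    intro x hx
    rcases (hm0 x).eq_or_lt with h0 | h0
    · exact Or.inl ⟨hx, h0.symm.le⟩
    · refine Or.inr (Set.mem_iUnion.2 ⟨⌊F x + C₀⌋₊, ?_⟩)
      have h1 : 0 ≤ F x + C₀ := by linarith [hF x hx h0]
      have h2 := Nat.floor_le h1
      have h3 := Nat.lt_floor_add_one (F x + C₀)
      rcases le_or_gt (h x) (A * (⌊F x + C₀⌋₊ + 1)) with h4 | h4
      · exact Or.inl ⟨hx, h0, ⟨h2, h3⟩, h4⟩
      · exact Or.inr ⟨hx, h0, ⟨h2, h3⟩, h4⟩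
  calc ∫⁻ x in S, ENNReal.ofReal (Real.exp (-F x) / m x) ∂μ = ν S := by
        rw [hν, withDensity_apply _ hS]
    _ ≤ ν {x | x ∈ S ∧ m x ≤ 0} + ν (⋃ j, (P j ∪ Q j)) :=
        (measure_mono hcov).trans (measure_union_le _ _)
    _ = ν (⋃ j, (P j ∪ Q j)) := by rw [hnull, zero_add]
    _ ≤ ∑' j, ν (P j ∪ Q j) := measure_iUnion_le _
    _ ≤ ∑' j : ℕ, ENNReal.ofReal
          (Real.exp (C₀ - j) * (2 * (Real.exp 1 * (2 * (D * (j + 1)) + 2)))) := by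
        refine ENNReal.tsum_le_tsum fun j => (measure_union_le _ _).trans ?_
        have h1 := piece j (P j) (hPm j) (fun x hx => ⟨hx.1, hx.2.1, hx.2.2.1⟩)
          (Or.inl fun x hx => hx.2.2.2)
        have h2 := piece j (Q j) (hQm j) (fun x hx => ⟨hx.1, hx.2.1, hx.2.2.1⟩)
          (Or.inr fun x hx => hx.2.2.2)
        refine (add_le_add h1 h2).trans (le_of_eq ?_)
        rw [← ENNReal.ofReal_add (by positivity) (by positivity)]
        congr 1; ring
    _ = ENNReal.ofReal (garsiaConst C₀ D) :=
        (ENNReal.ofReal_tsum_of_nonneg (fun j => by positivity) (summable_garsia C₀ D)).symm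

/-- The volume of the superlevel set through `x` is a rank function on `{T ≤ w}`. -/
lemma volume_rank_le {n : ℕ} {w : EuclideanSpace ℝ (Fin n) → ℝ} (hw : Continuous w) {T : ℝ}
    (hfin : ∀ a, T ≤ a → volume {x | a ≤ w x} ≠ ⊤) (c : ℝ) :
    volume {x | x ∈ {x | T ≤ w x} ∧ volume.real {y | w x ≤ w y} ≤ c} ≤ ENNReal.ofReal c := by
  have hmeas : Measurable fun x => volume.real {y | w x ≤ w y} := by
    have : Antitone fun a => volume {y | a ≤ w y} := fun a b hab =>
      measure_mono fun y (hy : b ≤ w y) => hab.trans hy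
    exact (this.measurable.comp hw.measurable).ennreal_toReal
  have hV : MeasurableSet {x | x ∈ {x | T ≤ w x} ∧ volume.real {y | w x ≤ w y} ≤ c} :=
    (measurableSet_le measurable_const hw.measurable).inter
      (measurableSet_le hmeas measurable_const)
  rw [hV.measure_eq_iSup_isCompact]
  refine iSup_le fun K => iSup_le fun hK => iSup_le fun hKc => ?_
  rcases K.eq_empty_or_nonempty with rfl | hne
  · simp
  obtain ⟨x₀, hx₀, hmin⟩ := hKc.exists_isMinOn hne hw.continuousOn
  calc volume K ≤ volume {y | w x₀ ≤ w y} := measure_mono fun y hy => hmin hy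
    _ = ENNReal.ofReal (volume.real {y | w x₀ ≤ w y}) :=
        (ENNReal.ofReal_toReal (hfin _ (hK hx₀).1)).symm
    _ ≤ _ := ENNReal.ofReal_le_ofReal (hK hx₀).2

/-! ### Sharp constant and energy of a test function -/

lemma omegaSphere_eq {n : ℕ} (hn : 2 ≤ n) : omegaSphere n = n * unitBallVolume n := by
  have hn0 : (0 : ℝ) < n := by exact_mod_cast (by omega : 0 < n)
  have h2 : (0 : ℝ) < n / 2 := by positivity
  have hG := Real.Gamma_pos_of_pos h2
  unfold omegaSphere unitBallVolume
  rw [Real.Gamma_add_one h2.ne', Real.sqrt_eq_rpow, ← Real.rpow_natCast, ← Real.rpow_mul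
    Real.pi_pos.le, show (1 / 2 : ℝ) * n = n / 2 by ring]
  field_simp

/-- The isoperimetric constant produces exactly the exponential constant of the inequality. -/
lemma isoConst_rpow {n : ℕ} (hn : 2 ≤ n) :
    isoConst n ^ ((n : ℝ) / (n - 1)) = gammaN1 n := by
  have hn0 : (0 : ℝ) < n := by exact_mod_cast (by omega : 0 < n)
  have hn1 : (0 : ℝ) < n - 1 := by
    have : (2 : ℝ) ≤ n := by exact_mod_cast hn
    linarith
  have hv := unitBallVolume_pos n
  unfold gammaN1 isoConst
  rw [omegaSphere_eq hn, Real.mul_rpow hn0.le (by positivity), Real.mul_rpow hn0.le hv.le,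
    ← Real.rpow_mul hv.le, ← mul_assoc]
  congr 1
  · rw [show (n : ℝ) / (n - 1) = 1 + 1 / (n - 1) by field_simp; ring, Real.rpow_add hn0,
      Real.rpow_one]
  · congr 1; field_simp

section TestFunction

variable {n : ℕ} {u : EuclideanSpace ℝ (Fin n) → ℝ}

lemma integrable_gradient_rpow (hn : 2 ≤ n) (hu : ContDiff ℝ (⊤ : ℕ∞) u)
    (hc : HasCompactSupport u) : Integrable fun x => ‖fderiv ℝ u x‖ ^ (n : ℝ) := by
  have hn0 : (0 : ℝ) < n := by exact_mod_cast (by omega : 0 < n)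
  refine Continuous.integrable_of_hasCompactSupport ?_ ?_
  · exact (hu.continuous_fderiv (by simp)).norm.rpow_const fun x => Or.inr hn0.le
  · exact (hc.fderiv ℝ).comp_left (g := fun z => ‖z‖ ^ (n : ℝ)) (by simp [show n ≠ 0 by omega])

/-- The energy of `u` below the level `a`. -/
def levelEnergy (u : EuclideanSpace ℝ (Fin n) → ℝ) (a : ℝ) : ℝ :=
  ∫ x in {x | |u x| < a}, ‖fderiv ℝ u x‖ ^ (n : ℝ)

lemma measurableSet_sublevel (hu : Continuous u) (a : ℝ) : MeasurableSet {x | |u x| < a} :=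
  (isOpen_lt hu.abs continuous_const).measurableSet

lemma measurableSet_layer (hu : Continuous u) (a b : ℝ) :
    MeasurableSet {x | a ≤ |u x| ∧ |u x| < b} :=
  (measurableSet_le measurable_const hu.abs.measurable).inter (measurableSet_sublevel hu b)

lemma levelEnergy_sub (hn : 2 ≤ n) (hu : ContDiff ℝ (⊤ : ℕ∞) u)
    (hc : HasCompactSupport u) {a b : ℝ} (hab : a ≤ b) :
    levelEnergy u b - levelEnergy u a =
      ∫ x in {x | a ≤ |u x| ∧ |u x| < b}, ‖fderiv ℝ u x‖ ^ (n : ℝ) := by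
  have hi := integrable_gradient_rpow hn hu hc
  have e : {x | |u x| < b} = {x | |u x| < a} ∪ {x | a ≤ |u x| ∧ |u x| < b} := by
    ext x
    simp only [Set.mem_ofPred_eq, Set.mem_union]
    constructor
    · intro h
      rcases lt_or_ge (|u x|) a with h1 | h1
      · exact Or.inl h1
      · exact Or.inr ⟨h1, h⟩
    · rintro (h | h)
      · exact h.trans_le hab
      · exact h.2
  unfold levelEnergy
  rw [e, setIntegral_union _ (measurableSet_layer hu.continuous a b) hi.integrableOn hi.integrableOn]
  · ring
  · rw [Set.disjoint_left]
    intro x (hx : |u x| < a) hx'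
    exact absurd hx'.1 (not_le.2 hx)

lemma volume_superlevel_ne_top (hu : Continuous u) (hc : HasCompactSupport u) {s : ℝ} (hs : 0 < s) :
    volume {x | s ≤ |u x|} ≠ ⊤ := (isCompact_superlevel hu hc hs).measure_lt_top.ne

lemma volume_layer (hu : Continuous u) (hc : HasCompactSupport u) {a b : ℝ} (ha : 0 < a)
    (hab : a ≤ b) : volume.real {x | a ≤ |u x| ∧ |u x| < b} =
      volume.real {x | a ≤ |u x|} - volume.real {x | b ≤ |u x|} := by
  have e : {x | a ≤ |u x| ∧ |u x| < b} = {x | a ≤ |u x|} \ {x | b ≤ |u x|} := by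
    ext x; simp
  have hsub : {x | b ≤ |u x|} ⊆ {x | a ≤ |u x|} := fun x (hx : b ≤ |u x|) => hab.trans hx
  rw [e, measureReal_sdiff hsub (measurableSet_le measurable_const hu.abs.measurable)
    (volume_superlevel_ne_top hu hc ha)]

/-- The thin-layer estimate: Hölder's inequality applied to the isoperimetric bound. -/
lemma layer_holder (hn : 2 ≤ n) (hu : ContDiff ℝ (⊤ : ℕ∞) u) (hc : HasCompactSupport u)
    {a b : ℝ} (ha : 0 < a) (hab : a < b) :
    isoConst n * (b - a) * volume.real {x | b ≤ |u x|} ^ (((n : ℝ) - 1) / n) ≤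
      (levelEnergy u b - levelEnergy u a) ^ (1 / (n : ℝ)) *
        (volume.real {x | a ≤ |u x|} - volume.real {x | b ≤ |u x|}) ^ (((n : ℝ) - 1) / n) := by
  have hn0 : (0 : ℝ) < n := by exact_mod_cast (by omega : 0 < n)
  have hn1 : (1 : ℝ) ≤ n - 1 := by
    have : (2 : ℝ) ≤ n := by exact_mod_cast hn
    linarith
  have hconj : (n : ℝ).HolderConjugate ((n : ℝ) / (n - 1)) := by
    rw [Real.holderConjugate_iff]
    refine ⟨by linarith, ?_⟩
    field_simp
    ring
  refine (level_gradient hn hu hc ha hab).trans ?_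
  rw [levelEnergy_sub hn hu hc hab.le, ← volume_layer hu.continuous hc ha hab.le]
  set S := {x | a ≤ |u x| ∧ |u x| < b} with hS
  have hfin : volume S ≠ ⊤ := measure_ne_top_of_subset (fun x hx => hx.1)
    (volume_superlevel_ne_top hu.continuous hc ha)
  have : IsFiniteMeasure (volume.restrict S) := ⟨by simpa using hfin.lt_top⟩
  have hf : MemLp (fun x => ‖fderiv ℝ u x‖) (ENNReal.ofReal n) (volume.restrict S) := by
    refine MemLp.restrict _ ?_
    exact ((hu.continuous_fderiv (by simp)).memLp_of_hasCompactSupport (hc.fderiv ℝ)).norm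
  have key := integral_mul_le_Lp_mul_Lq_of_nonneg (μ := volume.restrict S) hconj
    (f := fun x => ‖fderiv ℝ u x‖) (g := fun _ => (1 : ℝ))
    (Filter.Eventually.of_forall fun x => norm_nonneg _)
    (Filter.Eventually.of_forall fun x => zero_le_one) hf (memLp_const 1)
  simpa [one_div_div] using key

/-- The capacity estimate for the superlevel sets of `u`. -/
lemma capacity (hn : 2 ≤ n) (hu : ContDiff ℝ (⊤ : ℕ∞) u) (hc : HasCompactSupport u)
    {s t : ℝ} (hs : 0 < s) (hst : s < t) (ht : 0 < volume.real {x | t ≤ |u x|}) :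
    isoConst n * (t - s) ≤ (levelEnergy u t - levelEnergy u s) ^ (1 / (n : ℝ)) *
      Real.log (volume.real {x | s ≤ |u x|} / volume.real {x | t ≤ |u x|}) ^
        (((n : ℝ) - 1) / n) := by
  refine capacity_of_layers hn hst (N := fun a => volume.real {x | a ≤ |u x|}) (G := levelEnergy u)
    ?_ ht ?_ (isoConst_pos hn) fun a b ha hab hb => layer_holder hn hu hc (hs.trans_le ha) hab
  · intro a ha b hb hab
    exact measureReal_mono (fun x (hx : b ≤ |u x|) => hab.trans hx)
      (volume_superlevel_ne_top hu.continuous hc (hs.trans_le ha.1))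
  · intro a ha b hb hab
    have := levelEnergy_sub hn hu hc hab
    have h2 : 0 ≤ ∫ x in {x | a ≤ |u x| ∧ |u x| < b}, ‖fderiv ℝ u x‖ ^ (n : ℝ) :=
      integral_nonneg fun x => by positivity
    linarith

lemma integrable_abs_rpow (hu : Continuous u) (hc : HasCompactSupport u) {p : ℝ} (hp : 1 ≤ p) :
    Integrable fun x => |u x| ^ p := by
  refine Continuous.integrable_of_hasCompactSupport (hu.abs.rpow_const fun x => Or.inr (by linarith)) ?_
  exact hc.comp_left (g := fun z : ℝ => |z| ^ p) (by
    rw [abs_zero, Real.zero_rpow (by linarith)])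

/-! ### Normalization and conclusion -/

/-- The rescaled function `w = c |u|` with `c` the isoperimetric constant. Since
`c^{n/(n-1)} = γ_{n,1}`, the exponential weight becomes `exp (w^{n/(n-1)})`. -/
def scaled (u : EuclideanSpace ℝ (Fin n) → ℝ) (x : EuclideanSpace ℝ (Fin n)) : ℝ :=
  isoConst n * |u x|

lemma superlevel_scaled (hn : 2 ≤ n) (a : ℝ) :
    {x | a ≤ scaled u x} = {x | a / isoConst n ≤ |u x|} := by
  ext x
  simp only [Set.mem_ofPred_eq, scaled]
  rw [div_le_iff₀' (isoConst_pos hn)]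

lemma levelData_scaled (hn : 2 ≤ n) {p : ℝ} (hp : 1 ≤ p) (hu : ContDiff ℝ (⊤ : ℕ∞) u)
    (hc : HasCompactSupport u) (hE : (∫ x, ‖fderiv ℝ u x‖ ^ (n : ℝ)) ≤ 1) :
    LevelData n p (fun a => volume.real {x | a ≤ scaled u x})
      (fun a => levelEnergy u (a / isoConst n)) (isoConst n ^ p * ∫ x, |u x| ^ p) := by
  have hI := isoConst_pos hn
  simp only [superlevel_scaled hn]
  refine ⟨fun a b ha hab => ?_, fun a b ha hab => ?_, fun a => ?_, fun a => ?_, fun a ha => ?_,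
    fun s t hs hst ht => ?_⟩
  · exact measureReal_mono (fun x (hx : b / isoConst n ≤ |u x|) => le_trans (by gcongr) hx)
      (volume_superlevel_ne_top hu.continuous hc (by positivity))
  · have := levelEnergy_sub hn hu hc (show a / isoConst n ≤ b / isoConst n by gcongr)
    have h2 : 0 ≤ ∫ x in {x | a / isoConst n ≤ |u x| ∧ |u x| < b / isoConst n},
        ‖fderiv ℝ u x‖ ^ (n : ℝ) := integral_nonneg fun x => by positivity
    linarith
  · exact integral_nonneg fun x => by positivity
  · refine le_trans ?_ hE
    exact setIntegral_le_integral (integrable_gradient_rpow hn hu hc)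
      (Filter.Eventually.of_forall fun x => by positivity)
  · set b := a / isoConst n with hb
    have hb0 : 0 < b := by positivity
    have hab : a = isoConst n * b := by rw [hb]; field_simp
    rw [hab, Real.mul_rpow hI.le hb0.le, mul_assoc]
    gcongr
    calc b ^ p * volume.real {x | b ≤ |u x|} = ∫ x in {x | b ≤ |u x|}, b ^ p := by
          rw [setIntegral_const, smul_eq_mul, mul_comm]
      _ ≤ ∫ x in {x | b ≤ |u x|}, |u x| ^ p := by
          refine setIntegral_mono_on ?_ (integrable_abs_rpow hu.continuous hc hp).integrableOn
            (measurableSet_le measurable_const hu.continuous.abs.measurable) fun x hx => ?_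
          · exact integrableOn_const (volume_superlevel_ne_top hu.continuous hc hb0)
          · have : b ≤ |u x| := hx
            gcongr
      _ ≤ ∫ x, |u x| ^ p := setIntegral_le_integral (integrable_abs_rpow hu.continuous hc hp)
            (Filter.Eventually.of_forall fun x => by positivity)
  · have := capacity hn hu hc (show 0 < s / isoConst n by positivity)
      (show s / isoConst n < t / isoConst n by gcongr) ht
    rwa [← sub_div, mul_div_cancel₀ _ hI.ne'] at this

lemma norm_gradient_eq (x : EuclideanSpace ℝ (Fin n)) : ‖gradient u x‖ = ‖fderiv ℝ u x‖ := by
  rw [gradient, LinearIsometryEquiv.norm_map]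

/-- The slope in the oscillation bound for `log m` on a deficit level. -/
def oscConst (n : ℕ) (p T : ℝ) : ℝ :=
  (1 + 2 ^ (n + 1) * n + |(p + p / ((n : ℝ) - 1)) * Real.log T|) + 2 * (1 + 2 ^ n * n)

lemma oscConst_nonneg (n : ℕ) (p T : ℝ) : 0 ≤ oscConst n p T := by
  unfold oscConst; positivity

/-- On a deficit level, split into small and large heights, `log N` oscillates linearly in `X`. -/
lemma LevelData.osc {n : ℕ} (hn : 2 ≤ n) {p : ℝ} (hp : 1 ≤ p) {N G : ℝ → ℝ} {M : ℝ}
    (h : LevelData n p N G M) {T a b X : ℝ} (hT : 0 < T) (ha : T ≤ a) (hb : T ≤ b)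
    (hNa : 0 < N a) (hNb : 0 < N b) (hX : 1 ≤ X)
    (hFa : deficit n p N M a + growthConst n p T ≤ X)
    (hFb : deficit n p N M b + growthConst n p T ≤ X)
    (hab : a ^ ((n : ℝ) / (n - 1)) ≤ 2 ^ (n + 1) * n * X ∧
        b ^ ((n : ℝ) / (n - 1)) ≤ 2 ^ (n + 1) * n * X ∨
      2 ^ (n + 1) * n * X < a ^ ((n : ℝ) / (n - 1)) ∧
        2 ^ (n + 1) * n * X < b ^ ((n : ℝ) / (n - 1))) :
    Real.log (N a) - Real.log (N b) ≤ oscConst n p T * X := by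
  rcases le_or_gt b a with hba | hlt
  · have h1 : N a ≤ N b := h.anti b a (hT.trans_le hb) hba
    have h2 := Real.log_le_log hNa h1
    have h3 : 0 ≤ oscConst n p T * X := mul_nonneg (oscConst_nonneg n p T) (by linarith)
    linarith
  rw [← Real.log_div hNa.ne' hNb.ne']
  have hC0 : 0 ≤ growthConst n p T := le_max_left _ _
  rcases hab with ⟨-, h2⟩ | ⟨h1, -⟩
  · refine (h.close_small hn hp hT ha hlt hNb hX (by linarith) h2).trans ?_
    gcongr
    unfold oscConst
    have : (0 : ℝ) ≤ 2 * (1 + 2 ^ n * n) := by positivity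
    linarith
  · refine (h.close_large hn hp hT ha hlt hNb hX hFa hFb h1.le).trans ?_
    gcongr
    unfold oscConst
    have : (0 : ℝ) ≤ 1 + 2 ^ (n + 1) * n + |(p + p / ((n : ℝ) - 1)) * Real.log T| := by positivity
    linarith

/-- The defining property of the deficit. -/
lemma exp_deficit {p : ℝ} {N : ℝ → ℝ} {M a : ℝ} (hM : 0 < M) (ha : 0 < a) (hN : 0 < N a) :
    Real.exp (a ^ ((n : ℝ) / (n - 1))) / a ^ (p / ((n : ℝ) - 1)) =
      M * (Real.exp (-deficit n p N M a) / N a) := by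
  have e : -deficit n p N M a = Real.log (N a) - Real.log M + a ^ ((n : ℝ) / (n - 1)) -
      Real.log a * (p / ((n : ℝ) - 1)) := by unfold deficit; ring
  rw [e, Real.exp_sub, Real.exp_add, Real.exp_sub, Real.exp_log hM, Real.exp_log hN,
    ← Real.rpow_def_of_pos ha]
  field_simp

end TestFunction

/-- **Inequality (8.3)** (improved Moser–Trudinger inequality with exact growth condition for
the gradient on `ℝⁿ`): for `p ≥ 1` there is `C` such that for all `u ∈ C_c^∞(ℝⁿ)` with
`‖∇u‖_n ≤ 1`,
`∫_{|u| ≥ 1} exp[γ_{n,1}|u|^{n/(n-1)}]/|u|^{p/(n-1)} dx ≤ C‖u‖_p^p`. -/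
theorem moser_trudinger_exact_growth_gradient
    (n : ℕ) (hn : 2 ≤ n) (p : ℝ) (hp : 1 ≤ p) :
    ∃ C : ℝ, 0 < C ∧ ∀ u : EuclideanSpace ℝ (Fin n) → ℝ,
      ContDiff ℝ (⊤ : ℕ∞) u → HasCompactSupport u →
      (∫ x, ‖gradient u x‖ ^ (n : ℝ)) ≤ 1 →
      ∫ x in {x | 1 ≤ |u x|},
          Real.exp (gammaN1 n * |u x| ^ ((n : ℝ) / ((n : ℝ) - 1))) /
            |u x| ^ (p / ((n : ℝ) - 1))
        ≤ C * ∫ x, |u x| ^ p := by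
  set T := isoConst n with hTdef
  have hT : 0 < T := isoConst_pos hn
  set C₀ := growthConst n p T with hC₀
  set K := garsiaConst C₀ (oscConst n p T) with hK
  have hK0 : 0 ≤ K := garsiaConst_nonneg _ (oscConst_nonneg n p T)
  set B := T ^ (p / ((n : ℝ) - 1)) with hB
  have hB0 : 0 < B := by positivity
  refine ⟨B * T ^ p * K + 1, by positivity, fun u hu hc hE => ?_⟩
  simp only [norm_gradient_eq] at hE
  have hI0 : 0 ≤ ∫ x, |u x| ^ p := integral_nonneg fun x => by positivity
  have hLD := levelData_scaled hn hp hu hc hE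
  set N := fun a => volume.real {x | a ≤ scaled u x} with hN
  set G := fun a => levelEnergy u (a / isoConst n) with hG
  set M := isoConst n ^ p * ∫ x, |u x| ^ p with hM
  have hM0 : 0 ≤ M := by positivity
  have hw : Continuous (scaled u) := continuous_const.mul hu.continuous.abs
  have hfin : ∀ a, T ≤ a → volume {x | a ≤ scaled u x} ≠ ⊤ := fun a ha => by
    rw [superlevel_scaled hn]
    exact volume_superlevel_ne_top hu.continuous hc (div_pos (hT.trans_le ha) hT)
  have hNm : Measurable N := by
    have : Antitone fun a => volume {y | a ≤ scaled u y} := fun a b hab =>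
      measure_mono fun y (hy : b ≤ scaled u y) => hab.trans hy
    exact this.measurable.ennreal_toReal
  have hmm : Measurable fun x => N (scaled u x) := hNm.comp hw.measurable
  have hDm : Measurable (deficit n p N M) := by
    unfold deficit
    fun_prop
  set S := {x | T ≤ scaled u x} with hS
  have hSm : MeasurableSet S := measurableSet_le measurable_const hw.measurable
  have hS1 : {x | 1 ≤ |u x|} = S := by
    rw [hS, superlevel_scaled hn, div_self hT.ne']
  have hrank : ∀ c, 0 ≤ c → volume {x | x ∈ S ∧ N (scaled u x) ≤ c} ≤ ENNReal.ofReal c :=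
    fun c _ => volume_rank_le hw hfin c
  have hgarsia : ∫⁻ x in S, ENNReal.ofReal
      (Real.exp (-deficit n p N M (scaled u x)) / N (scaled u x)) ≤ ENNReal.ofReal K := by
    refine lintegral_deficit_le volume hSm (m := fun x => N (scaled u x))
      (F := fun x => deficit n p N M (scaled u x))
      (h := fun x => scaled u x ^ ((n : ℝ) / (n - 1))) (A := 2 ^ (n + 1) * n) hmm
      (hDm.comp hw.measurable) (hw.measurable.pow_const _) hrank (fun x => measureReal_nonneg)
      (oscConst_nonneg n p T) (fun x hx hx0 => ?_) ?_
    · have := hLD.le_deficit hn hT hx hx0 (θ := 1) (by norm_num) (hLD.le_one _)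
      rwa [Real.one_rpow, sub_self, zero_mul, zero_sub] at this
    · intro X hX x hx y hy hx0 hy0 hFx hFy hxy
      exact hLD.osc hn hp hT hx hy hx0 hy0 hX hFx hFy hxy
  have hae : ∀ᵐ x, x ∈ S → 0 < N (scaled u x) := by
    rw [ae_iff]
    refine measure_mono_null (fun x hx => ?_) (le_antisymm ((hrank 0 le_rfl).trans (by simp)) zero_le)
    simp only [Set.mem_ofPred_eq, Classical.not_imp, not_lt] at hx
    exact hx
  have hpt : ∀ x, x ∈ S → 0 < N (scaled u x) →
      Real.exp (gammaN1 n * |u x| ^ ((n : ℝ) / ((n : ℝ) - 1))) / |u x| ^ (p / ((n : ℝ) - 1)) =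
      B * M * (Real.exp (-deficit n p N M (scaled u x)) / N (scaled u x)) := by
    intro x hx hx0
    have hwx : 0 < scaled u x := hT.trans_le hx
    rw [mul_assoc, ← exp_deficit (hLD.pos hwx hx0) hwx hx0]
    have hux : 0 < |u x| := by
      have h1 : 1 ≤ |u x| := by rw [← hS1] at hx; exact hx
      linarith
    rw [scaled, ← hTdef, Real.mul_rpow hT.le hux.le, Real.mul_rpow hT.le hux.le, hTdef,
      isoConst_rpow hn, ← hTdef, ← hB]
    field_simp
  rw [hS1, integral_eq_lintegral_of_nonneg_ae
    (Filter.Eventually.of_forall fun x => by positivity)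
    (by
      have : Measurable u := hu.continuous.measurable
      exact Measurable.aestronglyMeasurable (by fun_prop))]
  have hle : ENNReal.toReal (∫⁻ x in S, ENNReal.ofReal
      (Real.exp (gammaN1 n * |u x| ^ ((n : ℝ) / ((n : ℝ) - 1))) / |u x| ^ (p / ((n : ℝ) - 1)))) ≤
      B * M * K := by
    refine ENNReal.toReal_le_of_le_ofReal (by positivity) ?_
    calc _ = ∫⁻ x in S, ENNReal.ofReal (B * M) *
          ENNReal.ofReal (Real.exp (-deficit n p N M (scaled u x)) / N (scaled u x)) := by
          refine setLIntegral_congr_fun_ae hSm ?_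
          filter_upwards [hae] with x hx hxS
          rw [hpt x hxS (hx hxS), ENNReal.ofReal_mul (by positivity)]
      _ = ENNReal.ofReal (B * M) * ∫⁻ x in S,
          ENNReal.ofReal (Real.exp (-deficit n p N M (scaled u x)) / N (scaled u x)) :=
          lintegral_const_mul' _ _ ENNReal.ofReal_ne_top
      _ ≤ ENNReal.ofReal (B * M) * ENNReal.ofReal K := by gcongr
      _ = _ := (ENNReal.ofReal_mul (by positivity)).symm
  refine hle.trans ?_
  rw [hM, ← hTdef]
  linarith [show (B * T ^ p * K + 1) * (∫ x, |u x| ^ p) =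
    B * (T ^ p * ∫ x, |u x| ^ p) * K + ∫ x, |u x| ^ p by ring]
end
end
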